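/- Assume (H4.1) and (H4.2) and suppose the Isaacs condition holds: H⁻(t,x,y,p,X) = H⁺(t,x,y,p,X) for all (t,x,y,p,X) ∈ [0,T]×ℝⁿ×ℝ×ℝⁿ×Sⁿ. If W ∈ Θ is a viscosity solution of ∂_t W + H⁻(t,x,W,DW,D²W) = 0 on [0,T)×ℝⁿ with W(T,x) = Φ(x), and U ∈ Θ is a viscosity solution of ∂_t U + H⁺(t,x,U,DU,D²U) = 0 on [0,T)×ℝⁿ with U(T,x) = Φ(x), then W(t,x) = U(t,x) for all (t,x) ∈ [0,T]×ℝⁿ. -/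

import Mathlib

noncomputable section

open scoped RealInnerProductSpace Matrix

attribute [local instance] Matrix.frobeniusNormedAddCommGroup

/-- The Euclidean state space `ℝⁿ`. -/
abbrev Eucl (n : ℕ) := EuclideanSpace ℝ (Fin n)

/-- Time derivative `∂φ/∂t (t,x)` of a function `φ : ℝ × ℝⁿ → ℝ`. -/
def timeDeriv {n : ℕ} (φ : ℝ → Eucl n → ℝ) (t : ℝ) (x : Eucl n) : ℝ :=
  deriv (fun s => φ s x) t

/-- Spatial gradient `Dφ(t,x) ∈ ℝⁿ`. -/
def spaceGrad {n : ℕ} (φ : ℝ → Eucl n → ℝ) (t : ℝ) (x : Eucl n) : Eucl n :=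
  gradient (fun y => φ t y) x

/-- Spatial Hessian `D²φ(t,x)` as an `n × n` matrix. -/
def spaceHess {n : ℕ} (φ : ℝ → Eucl n → ℝ) (t : ℝ) (x : Eucl n) :
    Matrix (Fin n) (Fin n) ℝ :=
  Matrix.of fun i j =>
    fderiv ℝ (fun y => fderiv ℝ (fun y' => φ t y') y (EuclideanSpace.single j (1 : ℝ))) x
      (EuclideanSpace.single i (1 : ℝ))

/-- The row vector `pᵀσ ∈ ℝᵈ`. -/
def rowMul {n d : ℕ} (p : Eucl n) (M : Matrix (Fin n) (Fin d) ℝ) : Eucl d :=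
  (WithLp.equiv 2 (Fin d → ℝ)).symm fun j => ∑ i, p i * M i j

/-- `φ ∈ C³_{l,b}([0,T]×ℝⁿ)`: three times continuously differentiable with all
derivatives of order 1 to 3 bounded. -/
def IsTestFunction {n : ℕ} (φ : ℝ → Eucl n → ℝ) : Prop :=
  ContDiff ℝ 3 (fun p : ℝ × Eucl n => φ p.1 p.2) ∧
  ∀ i : ℕ, 1 ≤ i → i ≤ 3 →
    ∃ M : ℝ, ∀ p : ℝ × Eucl n,
      ‖iteratedFDeriv ℝ i (fun q : ℝ × Eucl n => φ q.1 q.2) p‖ ≤ M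

/-- Viscosity subsolution of `∂_t w + G(t,x,w,Dw,D²w) = 0` on `[0,T)×ℝⁿ`
with terminal condition `w(T,·) = g`. -/
def IsViscositySubsolution {n : ℕ} (T : ℝ)
    (G : ℝ → Eucl n → ℝ → Eucl n → Matrix (Fin n) (Fin n) ℝ → ℝ)
    (g : Eucl n → ℝ) (w : ℝ → Eucl n → ℝ) : Prop :=
  (∀ x : Eucl n, w T x ≤ g x) ∧
  ∀ φ : ℝ → Eucl n → ℝ, IsTestFunction φ →
    ∀ t ∈ Set.Ico (0 : ℝ) T, ∀ x : Eucl n,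
      IsLocalMaxOn (fun p : ℝ × Eucl n => w p.1 p.2 - φ p.1 p.2)
        (Set.Icc (0 : ℝ) T ×ˢ (Set.univ : Set (Eucl n))) (t, x) →
      0 ≤ timeDeriv φ t x + G t x (φ t x) (spaceGrad φ t x) (spaceHess φ t x)

/-- Viscosity supersolution of `∂_t w + G(t,x,w,Dw,D²w) = 0` on `[0,T)×ℝⁿ`
with terminal condition `w(T,·) = g`. -/
def IsViscositySupersolution {n : ℕ} (T : ℝ)
    (G : ℝ → Eucl n → ℝ → Eucl n → Matrix (Fin n) (Fin n) ℝ → ℝ)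
    (g : Eucl n → ℝ) (w : ℝ → Eucl n → ℝ) : Prop :=
  (∀ x : Eucl n, g x ≤ w T x) ∧
  ∀ φ : ℝ → Eucl n → ℝ, IsTestFunction φ →
    ∀ t ∈ Set.Ico (0 : ℝ) T, ∀ x : Eucl n,
      IsLocalMinOn (fun p : ℝ × Eucl n => w p.1 p.2 - φ p.1 p.2)
        (Set.Icc (0 : ℝ) T ×ˢ (Set.univ : Set (Eucl n))) (t, x) →
      timeDeriv φ t x + G t x (φ t x) (spaceGrad φ t x) (spaceHess φ t x) ≤ 0

/-- Viscosity solution: both a sub- and a supersolution. -/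
def IsViscositySolution {n : ℕ} (T : ℝ)
    (G : ℝ → Eucl n → ℝ → Eucl n → Matrix (Fin n) (Fin n) ℝ → ℝ)
    (g : Eucl n → ℝ) (w : ℝ → Eucl n → ℝ) : Prop :=
  IsViscositySubsolution T G g w ∧ IsViscositySupersolution T G g w

/-- The lower Hamiltonian `H⁻`. -/
def lowerHamiltonian {n d : ℕ} {U V : Type*}
    (b : ℝ → Eucl n → U → V → Eucl n)
    (σ : ℝ → Eucl n → U → V → Matrix (Fin n) (Fin d) ℝ)
    (f : ℝ → Eucl n → ℝ → Eucl d → U → V → ℝ)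
    (t : ℝ) (x : Eucl n) (y : ℝ) (p : Eucl n) (X : Matrix (Fin n) (Fin n) ℝ) : ℝ :=
  ⨆ u : U, ⨅ v : V,
    (1 / 2) * Matrix.trace (σ t x u v * (σ t x u v)ᵀ * X)
      + ⟪p, b t x u v⟫
      + f t x y (rowMul p (σ t x u v)) u v

/-- The upper Hamiltonian `H⁺`. -/
def upperHamiltonian {n d : ℕ} {U V : Type*}
    (b : ℝ → Eucl n → U → V → Eucl n)
    (σ : ℝ → Eucl n → U → V → Matrix (Fin n) (Fin d) ℝ)
    (f : ℝ → Eucl n → ℝ → Eucl d → U → V → ℝ)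
    (t : ℝ) (x : Eucl n) (y : ℝ) (p : Eucl n) (X : Matrix (Fin n) (Fin n) ℝ) : ℝ :=
  ⨅ v : V, ⨆ u : U,
    (1 / 2) * Matrix.trace (σ t x u v * (σ t x u v)ᵀ * X)
      + ⟪p, b t x u v⟫
      + f t x y (rowMul p (σ t x u v)) u v

/-- Membership in the class `Θ` of continuous functions on `[0,T]×ℝⁿ` satisfying the
growth condition `φ(t,x)·exp{−Ã[log((|x|²+1)^{1/2})]²} → 0` as `|x| → ∞`,
uniformly in `t ∈ [0,T]`. -/
def MemTheta {n : ℕ} (T : ℝ) (φ : ℝ → Eucl n → ℝ) : Prop :=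
  ContinuousOn (fun p : ℝ × Eucl n => φ p.1 p.2)
      (Set.Icc (0 : ℝ) T ×ˢ (Set.univ : Set (Eucl n))) ∧
  ∃ A : ℝ, 0 < A ∧ ∀ ε > (0 : ℝ), ∃ R : ℝ, ∀ t ∈ Set.Icc (0 : ℝ) T, ∀ x : Eucl n,
    R ≤ ‖x‖ →
      |φ t x| * Real.exp (-A * (Real.log ((‖x‖ ^ 2 + 1) ^ ((1 : ℝ) / 2))) ^ 2) ≤ ε

section ViscosityComparison

open Set Filter Topology MeasureTheory Metric Pointwise

section Jensen

variable {F : Type*} [NormedAddCommGroup F] [InnerProductSpace ℝ F]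

/-- If every point of the graph of `w` is touched from below by a paraboloid of opening `Λ` and
slope `q`, then a global affine contact from above at `ζ` controls the slopes near `ζ`. -/
theorem norm_slope_sub_le {w : F → ℝ} {q : F → F} {Λ : ℝ}
    (hq : ∀ y y', w y + ⟪q y, y' - y⟫ - Λ / 2 * ‖y' - y‖ ^ 2 ≤ w y') {ζ p : F}
    (hζ : ∀ y, w y ≤ w ζ + ⟪p, y - ζ⟫) (hp : q ζ = p) (y : F) :
    ‖q y - q ζ‖ ≤ Λ * ‖y - ζ‖ := by
  subst hp
  have key : ∀ k : F, ⟪q y - q ζ, k⟫ ≤ Λ / 2 * (‖k‖ ^ 2 + ‖y - ζ‖ ^ 2) := by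
    intro k
    have h1 := hq y (y + k)
    have h2 := hζ (y + k)
    have h3 := hq ζ y
    rw [add_sub_cancel_left] at h1
    have e : ⟪q ζ, y + k - ζ⟫ = ⟪q ζ, y - ζ⟫ + ⟪q ζ, k⟫ := by
      rw [← inner_add_right]; congr 1; abel
    rw [inner_sub_left]
    linarith
  by_cases h0 : q y - q ζ = 0
  · rw [h0, norm_zero]
    have := key 0
    simp [h0] at this
    by_cases hy : ‖y - ζ‖ = 0
    · simp [hy]
    · have : 0 < ‖y - ζ‖ ^ 2 := by positivity
      have : 0 ≤ Λ := by nlinarith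
      positivity
  · have hpos : 0 < ‖q y - q ζ‖ := norm_pos_iff.2 h0
    have := key ((‖y - ζ‖ / ‖q y - q ζ‖) • (q y - q ζ))
    rw [inner_smul_right, real_inner_self_eq_norm_sq, norm_smul, norm_div, norm_norm, norm_norm,
      div_mul_cancel₀ _ hpos.ne'] at this
    have e : ‖y - ζ‖ / ‖q y - q ζ‖ * ‖q y - q ζ‖ ^ 2 = ‖y - ζ‖ * ‖q y - q ζ‖ := by
      field_simp
    rw [e] at this
    rcases (norm_nonneg (y - ζ)).eq_or_lt with hy | hy
    · have hyz : y - ζ = 0 := norm_eq_zero.1 hy.symm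
      rw [sub_eq_zero] at hyz
      subst hyz
      simp
    · by_contra! hc
      nlinarith

theorem slope_eq_of_contact {w : F → ℝ} {q : F → F} {Λ : ℝ} (hΛ : 0 ≤ Λ)
    (hq : ∀ y y', w y + ⟪q y, y' - y⟫ - Λ / 2 * ‖y' - y‖ ^ 2 ≤ w y') {ζ p : F}
    (hζ : ∀ y, w y ≤ w ζ + ⟪p, y - ζ⟫) : q ζ = p := by
  set s : ℝ := 1 / (Λ + 1)
  have hs : 0 < s := by positivity
  have hs' : s * (Λ + 1) = 1 := by simp only [s]; field_simp
  have h1 := hq ζ (ζ + s • (q ζ - p))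
  have h2 := hζ (ζ + s • (q ζ - p))
  rw [add_sub_cancel_left] at h1 h2
  have h3 : ⟪q ζ, s • (q ζ - p)⟫ - ⟪p, s • (q ζ - p)⟫ = s * ‖q ζ - p‖ ^ 2 := by
    rw [← inner_sub_left, inner_smul_right, real_inner_self_eq_norm_sq]
  rw [norm_smul, Real.norm_of_nonneg hs.le, mul_pow] at h1
  have h4 : s * ‖q ζ - p‖ ^ 2 * (1 - Λ / 2 * s) ≤ 0 := by nlinarith
  have h5 : 0 < 1 - Λ / 2 * s := by nlinarith
  have h6 : s * ‖q ζ - p‖ ^ 2 ≤ 0 := by nlinarith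
  have h7 : ‖q ζ - p‖ ^ 2 ≤ 0 := by nlinarith
  have h8 : ‖q ζ - p‖ = 0 := by nlinarith [norm_nonneg (q ζ - p)]
  exact sub_eq_zero.1 (norm_eq_zero.1 h8)

/-- A function with approximately affine sub-slopes has an approximately quadratic increment. -/
theorem abs_increment_sub_half_le {j c : ℝ → ℝ} {B a κ : ℝ}
    (hj : ∀ s s', j s + c s * (s' - s) - B * (s' - s) ^ 2 ≤ j s')
    (hc : ∀ s ∈ Icc (0 : ℝ) 1, |c s - a * s| ≤ κ) : |j 1 - j 0 - a / 2| ≤ κ := by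
  set D := |B| + |a|
  have hstep : ∀ s ∈ Icc (0 : ℝ) 1, ∀ s' ∈ Icc (0 : ℝ) 1, s ≤ s' →
      |(j s' - a * s' ^ 2 / 2) - (j s - a * s ^ 2 / 2)| ≤ κ * (s' - s) + D * (s' - s) ^ 2 := by
    intro s hs s' hs' hss
    obtain ⟨e, rfl⟩ : ∃ e, s' = s + e := ⟨s' - s, by ring⟩
    have h1 := hj s (s + e)
    have h2 := hj (s + e) s
    have h3 := abs_le.1 (hc s hs)
    have h4 := abs_le.1 (hc (s + e) hs')
    have hB := le_abs_self B
    have ha := abs_le.1 (le_refl |a|)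
    have he0 : 0 ≤ e := by linarith
    have hsq : 0 ≤ e ^ 2 := sq_nonneg e
    rw [show s - (s + e) = -e by ring] at h2
    rw [add_sub_cancel_left] at h1 ⊢
    have k1 : -κ * e ≤ (c s - a * s) * e := mul_le_mul_of_nonneg_right h3.1 he0
    have k2 : (c (s + e) - a * (s + e)) * e ≤ κ * e := mul_le_mul_of_nonneg_right h4.2 he0
    have k3 : B * e ^ 2 ≤ |B| * e ^ 2 := mul_le_mul_of_nonneg_right hB hsq
    have k4 : a * e ^ 2 ≤ |a| * e ^ 2 := mul_le_mul_of_nonneg_right ha.2 hsq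
    have k5 : -|a| * e ^ 2 ≤ a * e ^ 2 := mul_le_mul_of_nonneg_right ha.1 hsq
    have k6 : 0 ≤ |a| * e ^ 2 := by positivity
    rw [abs_le]
    constructor <;> simp only [D] <;> nlinarith
  have hsum : ∀ m : ℕ, 0 < m → ∀ i : ℕ, i ≤ m →
      |(j (i / m) - a * ((i : ℝ) / m) ^ 2 / 2) - j 0| ≤ i * (κ / m + D / m ^ 2) := by
    intro m hm i
    have hm' : (0 : ℝ) < m := by exact_mod_cast hm
    induction i with
    | zero => intro _; simp
    | succ i ih =>
      intro hi
      have h1 := ih (by omega)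
      have hi' : (i : ℝ) + 1 ≤ m := by exact_mod_cast hi
      have h2 := hstep ((i : ℝ) / m) ⟨by positivity, by rw [div_le_one hm']; linarith⟩
        (((i + 1 : ℕ) : ℝ) / m) ⟨by positivity, by rw [div_le_one hm']; push_cast; linarith⟩
        (by gcongr; simp)
      have e : ((i + 1 : ℕ) : ℝ) / m - (i : ℝ) / m = 1 / m := by push_cast; ring
      rw [e] at h2
      have e2 : κ * (1 / (m : ℝ)) + D * (1 / m) ^ 2 = κ / m + D / m ^ 2 := by ring
      rw [e2] at h2
      have h3 := abs_add_le (j (((i + 1 : ℕ) : ℝ) / m) - a * (((i + 1 : ℕ) : ℝ) / m) ^ 2 / 2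
        - (j ((i : ℝ) / m) - a * ((i : ℝ) / m) ^ 2 / 2))
        ((j (i / m) - a * ((i : ℝ) / m) ^ 2 / 2) - j 0)
      rw [sub_add_sub_cancel] at h3
      push_cast at *
      linarith
  have hD : 0 ≤ D := by positivity
  refine le_of_forall_pos_le_add fun ε hε => ?_
  obtain ⟨m, hm⟩ := exists_nat_gt (D / ε)
  have hm0 : (0 : ℝ) < m := lt_of_le_of_lt (by positivity) hm
  have := hsum m (by exact_mod_cast hm0) m le_rfl
  rw [div_self hm0.ne'] at this
  have e : (m : ℝ) * (κ / m + D / m ^ 2) = κ + D / m := by field_simp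
  rw [e] at this
  have h3 : D / m ≤ ε := by
    rw [div_lt_iff₀ hε] at hm
    rw [div_le_iff₀ hm0]; linarith
  have e2 : j 1 - j 0 - a / 2 = j 1 - a * 1 ^ 2 / 2 - j 0 := by ring
  rw [e2]
  linarith

/-- **Jensen–Alexandrov lemma.** A semiconvex function whose affine perturbations of small slope
all attain a global maximum is twice differentiable, in the sense of second order expansions, at
one of these maximum points. -/
theorem exists_contact_second_order_expansion [FiniteDimensional ℝ F]
    {w : F → ℝ} {q : F → F} {Λ : ℝ} (hΛ : 0 ≤ Λ)
    (hq : ∀ y y', w y + ⟪q y, y' - y⟫ - Λ / 2 * ‖y' - y‖ ^ 2 ≤ w y') {r : ℝ} (hr : 0 < r)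
    (hmax : ∀ p : F, ‖p‖ ≤ r → ∃ ζ, ∀ y, w y ≤ w ζ + ⟪p, y - ζ⟫) :
    ∃ (ζ p : F) (A : F →L[ℝ] F), ‖p‖ ≤ r ∧ (∀ y, w y ≤ w ζ + ⟪p, y - ζ⟫) ∧
      ∀ κ > 0, ∀ᶠ h in 𝓝 (0 : F),
        |w (ζ + h) - w ζ - ⟪p, h⟫ - 1 / 2 * ⟪A h, h⟫| ≤ κ * ‖h‖ ^ 2 := by
  let _ : MeasurableSpace F := borel F
  have : BorelSpace F := ⟨rfl⟩
  set μ : Measure F := μH[Module.finrank ℝ F]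
  set K : Set F := {ζ | ‖q ζ‖ ≤ r ∧ ∀ y, w y ≤ w ζ + ⟪q ζ, y - ζ⟫}
  have hsurj : closedBall (0 : F) r ⊆ q '' K := by
    intro p hp
    rw [mem_closedBall_zero_iff] at hp
    obtain ⟨ζ, hζ⟩ := hmax p hp
    have e := slope_eq_of_contact hΛ hq hζ
    exact ⟨ζ, ⟨by rw [e]; exact hp, by rw [e]; exact hζ⟩, e⟩
  have hLip : LipschitzOnWith ⟨Λ, hΛ⟩ q K := by
    refine LipschitzOnWith.of_dist_le_mul fun y _ ζ hζ => ?_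
    rw [dist_eq_norm, dist_eq_norm]
    exact norm_slope_sub_le hq hζ.2 rfl y
  have hμK : μ K ≠ 0 := by
    intro h0
    have h1 := hLip.hausdorffMeasure_image_le (d := (Module.finrank ℝ F : ℝ)) (by positivity)
    have h2 : μ (q '' K) = 0 := by
      refine le_antisymm (h1.trans ?_) zero_le
      change _ * μ K ≤ 0
      rw [h0, mul_zero]
    have h3 : μ (closedBall (0 : F) r) = 0 := measure_mono_null hsurj h2
    exact (measure_closedBall_pos μ (0 : F) hr).ne' h3
  have hdiff : ∀ᵐ x ∂(μ.restrict K), x ∈ K → DifferentiableWithinAt ℝ q K x :=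
    ae_restrict_of_ae hLip.ae_differentiableWithinAt_of_mem
  have hdens := Besicovitch.ae_tendsto_measure_inter_div μ K
  obtain ⟨ζ, hζK, hζd, hζt⟩ : ∃ ζ ∈ K, DifferentiableWithinAt ℝ q K ζ ∧
      Tendsto (fun r => μ (K ∩ closedBall ζ r) / μ (closedBall ζ r)) (𝓝[>] 0) (𝓝 1) := by
    by_contra! hcon
    have h1 := hdiff.and hdens
    rw [ae_iff] at h1
    have h2 := (Measure.le_restrict_apply K _).trans h1.le
    refine hμK (measure_mono_null ?_ (le_antisymm h2 zero_le))
    intro x hx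
    exact ⟨fun h => hcon x hx (h.1 hx) h.2, hx⟩
  obtain ⟨A, hA⟩ := hζd
  have hslope : ∀ κ > 0, ∀ᶠ h in 𝓝 (0 : F), ‖q (ζ + h) - q ζ - A h‖ ≤ κ * ‖h‖ := by
    intro κ hκ
    set D := Λ + ‖A‖
    have hD : 0 ≤ D := by positivity
    set ε := min 1 (κ / (2 * (D + 1))) / 2 with hε
    have hε0 : 0 < ε := by positivity
    have hε1 : 2 * ε ≤ 1 := by rw [hε]; linarith [min_le_left 1 (κ / (2 * (D + 1)))]
    have hε2 : D * (2 * ε) ≤ κ / 2 := by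
      have h1 : 2 * ε ≤ κ / (2 * (D + 1)) := by
        rw [hε]; linarith [min_le_right 1 (κ / (2 * (D + 1)))]
      calc D * (2 * ε) ≤ (D + 1) * (κ / (2 * (D + 1))) := by gcongr; linarith
        _ = κ / 2 := by field_simp
    obtain ⟨t, -, htfin, htc⟩ := (isCompact_closedBall (0 : F) 1).finite_cover_balls hε0
    have hev : ∀ᶠ ρ in 𝓝[>] (0 : ℝ), ∀ c ∈ t, (K ∩ ({ζ} + ρ • ball c ε)).Nonempty := by
      rw [eventually_all_finite htfin]
      intro c _
      exact Measure.eventually_nonempty_inter_smul_of_density_one μ K ζ hζt _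
        measurableSet_ball (measure_ball_pos μ c hε0).ne'
    have hev2 := hA.isLittleO.def (show 0 < κ / 4 by positivity)
    rw [eventually_nhdsWithin_iff, Metric.eventually_nhds_iff] at hev2
    obtain ⟨ρ₁, hρ₁, hρ₁'⟩ := hev2
    rw [eventually_nhdsWithin_iff, Metric.eventually_nhds_iff] at hev
    obtain ⟨ρ₂, hρ₂, hρ₂'⟩ := hev
    have hnear : ∀ᶠ h in 𝓝 (0 : F), ‖h‖ < min (ρ₁ / 2) ρ₂ := by
      have := Metric.ball_mem_nhds (0 : F) (show 0 < min (ρ₁ / 2) ρ₂ by positivity)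
      filter_upwards [this] with h hh
      simpa using hh
    filter_upwards [hnear] with h hh
    by_cases h0 : h = 0
    · simp [h0]
    have hh0 : 0 < ‖h‖ := norm_pos_iff.2 h0
    have hunit : (‖h‖⁻¹ • h) ∈ closedBall (0 : F) 1 := by
      simp [norm_smul, hh0.ne']
    obtain ⟨c, hct, hc⟩ := mem_iUnion₂.1 (htc hunit)
    obtain ⟨y, hyK, hy⟩ := hρ₂' (by simpa using hh.trans_le (min_le_right _ _)) hh0 c hct
    obtain ⟨a, ha, _, ⟨e, he, rfl⟩, rfl⟩ := hy
    simp only [mem_singleton_iff.1 ha] at hyK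
    set d := ‖h‖ • e with hd
    have hhd : ‖h - d‖ ≤ 2 * ε * ‖h‖ := by
      have e1 : h = ‖h‖ • (‖h‖⁻¹ • h) := by rw [smul_smul, mul_inv_cancel₀ hh0.ne', one_smul]
      have e2 : h - d = ‖h‖ • (‖h‖⁻¹ • h - e) := by rw [smul_sub, ← e1]
      rw [e2, norm_smul, norm_norm, mul_comm]
      gcongr
      rw [← dist_eq_norm]
      have := dist_triangle_right (‖h‖⁻¹ • h) e c
      rw [mem_ball] at hc he
      linarith
    have hdn : ‖d‖ ≤ 2 * ‖h‖ := by
      have h1 : ‖d‖ ≤ ‖h‖ + ‖h - d‖ := by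
        have := norm_sub_le h (h - d)
        rwa [sub_sub_cancel] at this
      nlinarith
    have h1 := hρ₁' (y := ζ + d) (by
      rw [dist_eq_norm, add_sub_cancel_left]
      have := hh.trans_le (min_le_left _ _)
      linarith) hyK
    rw [add_sub_cancel_left] at h1
    have h2 := norm_slope_sub_le hq hyK.2 rfl (ζ + h)
    rw [add_sub_add_left_eq_sub] at h2
    have h3 : ‖A (d - h)‖ ≤ ‖A‖ * ‖d - h‖ := A.le_opNorm _
    rw [norm_sub_rev d h] at h3
    have e : q (ζ + h) - q ζ - A h
        = (q (ζ + h) - q (ζ + d)) + (q (ζ + d) - q ζ - A d) + A (d - h) := by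
      rw [map_sub]; abel
    rw [e]
    calc _ ≤ ‖q (ζ + h) - q (ζ + d)‖ + ‖q (ζ + d) - q ζ - A d‖ + ‖A (d - h)‖ := norm_add₃_le
      _ ≤ Λ * ‖h - d‖ + κ / 4 * ‖d‖ + ‖A‖ * ‖h - d‖ := by gcongr
      _ = D * ‖h - d‖ + κ / 4 * ‖d‖ := by ring
      _ ≤ D * (2 * ε * ‖h‖) + κ / 4 * (2 * ‖h‖) := by gcongr
      _ = (D * (2 * ε)) * ‖h‖ + κ / 2 * ‖h‖ := by ring
      _ ≤ κ / 2 * ‖h‖ + κ / 2 * ‖h‖ := by gcongr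
      _ = κ * ‖h‖ := by ring
  refine ⟨ζ, q ζ, A, hζK.1, hζK.2, fun κ hκ => ?_⟩
  obtain ⟨ρ, hρ, hρ'⟩ := Metric.eventually_nhds_iff.1 (hslope κ hκ)
  filter_upwards [Metric.ball_mem_nhds (0 : F) hρ] with h hh
  rw [mem_ball_zero_iff] at hh
  have hmain := abs_increment_sub_half_le (j := fun s => w (ζ + s • h) - ⟪q ζ, s • h⟫)
    (c := fun s => ⟪q (ζ + s • h) - q ζ, h⟫) (B := Λ / 2 * ‖h‖ ^ 2) (a := ⟪A h, h⟫)
    (κ := κ * ‖h‖ ^ 2) ?_ ?_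
  · simp only [one_smul, zero_smul, add_zero, inner_zero_right, sub_zero] at hmain
    convert hmain using 2
    ring
  · intro s s'
    have h1 := hq (ζ + s • h) (ζ + s' • h)
    rw [add_sub_add_left_eq_sub, ← sub_smul, inner_smul_right, norm_smul, mul_pow,
      Real.norm_eq_abs, sq_abs] at h1
    simp only [inner_smul_right, inner_sub_left]
    linarith
  · intro s hs
    have hsh : ‖s • h‖ ≤ ‖h‖ := by
      rw [norm_smul, Real.norm_of_nonneg hs.1]
      exact mul_le_of_le_one_left (norm_nonneg _) hs.2
    have h1 := hρ' (y := s • h) (by rw [dist_zero_right]; linarith)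
    have e : ⟪q (ζ + s • h) - q ζ, h⟫ - ⟪A h, h⟫ * s = ⟪q (ζ + s • h) - q ζ - A (s • h), h⟫ := by
      rw [map_smul, inner_sub_left, inner_sub_left, inner_sub_left, real_inner_smul_left]; ring
    rw [e]
    calc _ ≤ ‖q (ζ + s • h) - q ζ - A (s • h)‖ * ‖h‖ := abs_real_inner_le_norm _ _
      _ ≤ (κ * ‖h‖) * ‖h‖ := by gcongr; exact h1.trans (by gcongr)
      _ = κ * ‖h‖ ^ 2 := by ring

end Jensen

section Doubling

theorem exists_sup_convolution {E : Type*} [NormedAddCommGroup E]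
    {S : Set E} (hS : IsCompact S) (hne : S.Nonempty) {u : E → ℝ}
    (hu : ContinuousOn u S) (c : ℝ) :
    ∃ (m : E → E) (w : E → ℝ), (∀ z, m z ∈ S) ∧ (∀ z, w z = u (m z) - c * ‖m z - z‖ ^ 2) ∧
      ∀ z, ∀ y ∈ S, u y - c * ‖y - z‖ ^ 2 ≤ w z := by
  have : ∀ z, ∃ y ∈ S, ∀ y' ∈ S, u y' - c * ‖y' - z‖ ^ 2 ≤ u y - c * ‖y - z‖ ^ 2 := fun z =>
    hS.exists_isMaxOn hne (hu.sub (by fun_prop))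
  choose m hm hm' using this
  exact ⟨m, fun z => u (m z) - c * ‖m z - z‖ ^ 2, hm, fun _ => rfl, hm'⟩

variable {E : Type*} [NormedAddCommGroup E] [InnerProductSpace ℝ E]

/-- `u` admits, relative to `S` at `y`, a second order upper expansion with gradient `p` and
quadratic part `X`. -/
def HasSuperjetOn (u : E → ℝ) (S : Set E) (y p : E) (X : E →L[ℝ] E) : Prop :=
  ∀ κ > 0, ∀ᶠ h in 𝓝 (0 : E), y + h ∈ S →
    u (y + h) ≤ u y + ⟪p, h⟫ + 1 / 2 * ⟪X h, h⟫ + κ * ‖h‖ ^ 2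

theorem sup_convolution_slope {S : Set E} {u w : E → ℝ} {m : E → E} {c : ℝ}
    (hm : ∀ z, m z ∈ S) (hw : ∀ z, w z = u (m z) - c * ‖m z - z‖ ^ 2)
    (hle : ∀ z, ∀ y ∈ S, u y - c * ‖y - z‖ ^ 2 ≤ w z) (z z' : E) :
    w z + ⟪(2 * c) • (m z - z), z' - z⟫ - c * ‖z' - z‖ ^ 2 ≤ w z' := by
  refine le_trans (le_of_eq ?_) (hle z' (m z) (hm z))
  have e : m z - z' = (m z - z) - (z' - z) := by abel
  rw [hw z, e, norm_sub_sq_real (m z - z), real_inner_smul_left]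
  ring

theorem sup_convolution_superjet {S : Set E} {u w : E → ℝ} {m : E → E} {c : ℝ}
    (hw : ∀ z, w z = u (m z) - c * ‖m z - z‖ ^ 2)
    (hle : ∀ z, ∀ y ∈ S, u y - c * ‖y - z‖ ^ 2 ≤ w z) {z p : E} {X : E →L[ℝ] E}
    (hX : HasSuperjetOn w univ z p X) : HasSuperjetOn u S (m z) p X := by
  intro κ hκ
  filter_upwards [hX κ hκ] with h hh hS
  have h1 := hh (mem_univ _)
  have h2 := hle (z + h) _ hS
  rw [add_sub_add_right_eq_sub] at h2
  have h3 := hw z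
  linarith

theorem exists_isMax_doubling [FiniteDimensional ℝ E] {S : Set E} (hS : IsCompact S)
    (hne : S.Nonempty) {u v : E → ℝ} (hu : ContinuousOn u S) (hv : ContinuousOn v S)
    (A : E →L[ℝ] E) (hpos : ∀ x, 0 ≤ ⟪A x, x⟫) {c : ℝ} (hc : 0 < c) (p p' : E) :
    ∃ y ∈ S, ∃ y' ∈ S, ∃ z z' : E, ∀ x ∈ S, ∀ x' ∈ S, ∀ k k' : E,
      u x - c * ‖x - k‖ ^ 2 + (v x' - c * ‖x' - k'‖ ^ 2) - 1 / 2 * ⟪A (k - k'), k - k'⟫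
          - ⟪p, k⟫ - ⟪p', k'⟫
        ≤ u y - c * ‖y - z‖ ^ 2 + (v y' - c * ‖y' - z'‖ ^ 2) - 1 / 2 * ⟪A (z - z'), z - z'⟫
          - ⟪p, z⟫ - ⟪p', z'⟫ := by
  obtain ⟨Mu, hMu⟩ := hS.bddAbove_image hu
  obtain ⟨Mv, hMv⟩ := hS.bddAbove_image hv
  obtain ⟨R, hR⟩ := hS.isBounded.exists_norm_le
  obtain ⟨s₀, hs₀⟩ := hne
  set Ψ : (E × E) × (E × E) → ℝ := fun x =>
    u x.1.1 - c * ‖x.1.1 - x.2.1‖ ^ 2 + (v x.1.2 - c * ‖x.1.2 - x.2.2‖ ^ 2)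
      - 1 / 2 * ⟪A (x.2.1 - x.2.2), x.2.1 - x.2.2⟫ - ⟪p, x.2.1⟫ - ⟪p', x.2.2⟫ with hΨ
  have hcont : ContinuousOn Ψ ((S ×ˢ S) ×ˢ univ) := by
    have h1 : ContinuousOn (fun x : (E × E) × (E × E) => u x.1.1) ((S ×ˢ S) ×ˢ univ) :=
      hu.comp (by fun_prop) fun x hx => hx.1.1
    have h2 : ContinuousOn (fun x : (E × E) × (E × E) => v x.1.2) ((S ×ˢ S) ×ˢ univ) :=
      hv.comp (by fun_prop) fun x hx => hx.1.2
    refine ((((h1.sub ?_).add (h2.sub ?_)).sub ?_).sub ?_).sub ?_ <;> fun_prop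
  have hclosed : IsClosed (((S ×ˢ S) ×ˢ univ) : Set ((E × E) × (E × E))) :=
    (hS.isClosed.prod hS.isClosed).prod isClosed_univ
  set x₀ : (E × E) × (E × E) := ((s₀, s₀), (0, 0))
  set B := (Mu + Mv + 2 * c * R ^ 2 + (‖p‖ ^ 2 + ‖p'‖ ^ 2) / c - Ψ x₀) * (4 / c) with hB
  have haux : ∀ y ∈ S, ∀ z a : E, -c * ‖y - z‖ ^ 2 - ⟪a, z⟫
      ≤ c * R ^ 2 + ‖a‖ ^ 2 / c - c / 4 * ‖z‖ ^ 2 := by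
    intro y hy z a
    have h1 : ‖z‖ ≤ ‖y‖ + ‖y - z‖ := by
      have := norm_sub_le y (y - z)
      rwa [sub_sub_cancel] at this
    have h2 : ‖z‖ ^ 2 ≤ 2 * R ^ 2 + 2 * ‖y - z‖ ^ 2 := by
      have h3 := hR y hy
      have h5 : ‖z‖ ≤ R + ‖y - z‖ := by linarith
      nlinarith [sq_nonneg (R - ‖y - z‖), norm_nonneg z]
    have h3 : -⟪a, z⟫ ≤ ‖a‖ * ‖z‖ := by
      have := abs_real_inner_le_norm a z
      linarith [neg_abs_le ⟪a, z⟫]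
    have h4 : ‖a‖ * ‖z‖ ≤ ‖a‖ ^ 2 / c + c / 4 * ‖z‖ ^ 2 := by
      have : 0 ≤ (‖a‖ - c / 2 * ‖z‖) ^ 2 / c := by positivity
      have e : (‖a‖ - c / 2 * ‖z‖) ^ 2 / c = ‖a‖ ^ 2 / c + c / 4 * ‖z‖ ^ 2 - ‖a‖ * ‖z‖ := by
        field_simp; ring
      linarith
    nlinarith
  obtain ⟨x, hx, hmax⟩ := hcont.exists_isMaxOn' hclosed (x₀ := x₀) ⟨⟨hs₀, hs₀⟩, mem_univ _⟩ (by
    rw [eventually_inf_principal]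
    have hcomp := (isCompact_closedBall (0 : (E × E) × (E × E))
      (max R (B + 1))).compl_mem_cocompact
    filter_upwards [hcomp] with x hx hxS
    by_contra! hlt
    apply hx
    rw [mem_closedBall_zero_iff, Prod.norm_def, Prod.norm_def, Prod.norm_def]
    have h1 := haux x.1.1 hxS.1.1 x.2.1 p
    have h2 := haux x.1.2 hxS.1.2 x.2.2 p'
    have h3 := hpos (x.2.1 - x.2.2)
    have h4 := hMu (mem_image_of_mem u hxS.1.1)
    have h5 := hMv (mem_image_of_mem v hxS.1.2)
    have h6 : c / 4 * (‖x.2.1‖ ^ 2 + ‖x.2.2‖ ^ 2)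
        ≤ Mu + Mv + 2 * c * R ^ 2 + (‖p‖ ^ 2 + ‖p'‖ ^ 2) / c - Ψ x₀ := by
      have : Ψ x = u x.1.1 - c * ‖x.1.1 - x.2.1‖ ^ 2 + (v x.1.2 - c * ‖x.1.2 - x.2.2‖ ^ 2)
        - 1 / 2 * ⟪A (x.2.1 - x.2.2), x.2.1 - x.2.2⟫ - ⟪p, x.2.1⟫ - ⟪p', x.2.2⟫ := rfl
      rw [add_div]
      linarith
    have h7 : ‖x.2.1‖ ^ 2 + ‖x.2.2‖ ^ 2 ≤ B := by
      rw [hB, ← div_le_iff₀ (by positivity)]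
      calc _ = c / 4 * (‖x.2.1‖ ^ 2 + ‖x.2.2‖ ^ 2) := by field_simp
        _ ≤ _ := h6
    have h8 : ‖x.2.1‖ ≤ B + 1 := by nlinarith [sq_nonneg ‖x.2.2‖, sq_nonneg (‖x.2.1‖ - 1)]
    have h9 : ‖x.2.2‖ ≤ B + 1 := by nlinarith [sq_nonneg ‖x.2.1‖, sq_nonneg (‖x.2.2‖ - 1)]
    exact max_le (le_max_of_le_left (max_le (hR _ hxS.1.1) (hR _ hxS.1.2)))
      (le_max_of_le_right (max_le h8 h9)))
  refine ⟨x.1.1, hx.1.1, x.1.2, hx.1.2, x.2.1, x.2.2, fun a ha a' ha' k k' => ?_⟩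
  exact hmax (show ((a, a'), (k, k')) ∈ (S ×ˢ S) ×ˢ univ from ⟨⟨ha, ha'⟩, mem_univ _⟩)

theorem quadratic_add_of_symm {A : E →L[ℝ] E} (hsymm : ∀ x y, ⟪A x, y⟫ = ⟪x, A y⟫) (x y : E) :
    ⟪A (x + y), x + y⟫ = ⟪A x, x⟫ + 2 * ⟪A x, y⟫ + ⟪A y, y⟫ := by
  rw [map_add, inner_add_left, inner_add_right, inner_add_right, hsymm y x, real_inner_comm (A x) y]
  ring

/-- A quadratic form dominated by another one up to a vanishing relative error is dominated. -/
theorem nonpos_of_eventually_quadratic_le {G : Type*} [NormedAddCommGroup G] [NormedSpace ℝ G]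
    {Q : G → ℝ} (hQ : ∀ (s : ℝ) g, Q (s • g) = s ^ 2 * Q g)
    (h : ∀ κ > 0, ∀ᶠ g in 𝓝 (0 : G), Q g ≤ κ * ‖g‖ ^ 2) (g : G) : Q g ≤ 0 := by
  have key : ∀ κ > 0, Q g ≤ κ * ‖g‖ ^ 2 := by
    intro κ hκ
    have ht : Tendsto (fun s : ℝ => s • g) (𝓝[>] 0) (𝓝 0) := by
      have : Tendsto (fun s : ℝ => s • g) (𝓝 0) (𝓝 ((0 : ℝ) • g)) :=
        (continuous_id.smul continuous_const).tendsto 0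
      rw [zero_smul] at this
      exact this.mono_left nhdsWithin_le_nhds
    obtain ⟨s, hs, hs0⟩ := ((ht.eventually (h κ hκ)).and self_mem_nhdsWithin).exists
    rw [hQ, norm_smul, mul_pow, Real.norm_eq_abs, sq_abs] at hs
    have : 0 < s ^ 2 := by have : (0 : ℝ) < s := hs0; positivity
    nlinarith
  refine le_of_forall_pos_le_add fun ε hε => ?_
  have h1 := key (ε / (‖g‖ ^ 2 + 1)) (by positivity)
  have h2 : ε / (‖g‖ ^ 2 + 1) * ‖g‖ ^ 2 ≤ ε := by
    rw [div_mul_eq_mul_div, div_le_iff₀ (by positivity)]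
    nlinarith
  linarith

/-- Local form of the doubling argument: from a second order expansion of
`wu z + wv z' - ½⟨A (z - z'), z - z'⟩` at a contact point one reads off expansions of `wu` and `wv`
together with the matrix inequality. -/
theorem superjets_of_expansion [FiniteDimensional ℝ E] {wu wv : E → ℝ} {A : E →L[ℝ] E}
    (hsymm : ∀ x y, ⟪A x, y⟫ = ⟪x, A y⟫) {w : WithLp 2 (E × E) → ℝ}
    (hw : ∀ ζ, w ζ = wu ζ.fst + wv ζ.snd - 1 / 2 * ⟪A (ζ.fst - ζ.snd), ζ.fst - ζ.snd⟫)
    {ζ p : WithLp 2 (E × E)} {B : WithLp 2 (E × E) →L[ℝ] WithLp 2 (E × E)}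
    (hcontact : ∀ y, w y ≤ w ζ + ⟪p, y - ζ⟫)
    (hexp : ∀ κ > 0, ∀ᶠ h in 𝓝 (0 : WithLp 2 (E × E)),
        |w (ζ + h) - w ζ - ⟪p, h⟫ - 1 / 2 * ⟪B h, h⟫| ≤ κ * ‖h‖ ^ 2) :
    ∃ X Y : E →L[ℝ] E, HasSuperjetOn wu univ ζ.fst (p.fst + A (ζ.fst - ζ.snd)) X ∧
      HasSuperjetOn wv univ ζ.snd (p.snd - A (ζ.fst - ζ.snd)) Y ∧
      ∀ h h', ⟪X h, h⟫ + ⟪Y h', h'⟫ ≤ ⟪A (h - h'), h - h'⟫ := by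
  have : CompleteSpace E := FiniteDimensional.complete ℝ E
  set k := ζ.fst - ζ.snd with hk
  set e := (WithLp.prodContinuousLinearEquiv 2 ℝ E E).symm
  set ι₁ : E →L[ℝ] WithLp 2 (E × E) := (e : E × E →L[ℝ] WithLp 2 (E × E)) ∘L .inl ℝ E E
  set ι₂ : E →L[ℝ] WithLp 2 (E × E) := (e : E × E →L[ℝ] WithLp 2 (E × E)) ∘L .inr ℝ E E
  have f1 : ∀ h, (ι₁ h).fst = h := fun h => rfl
  have s1 : ∀ h, (ι₁ h).snd = 0 := fun h => rfl
  have f2 : ∀ h, (ι₂ h).fst = 0 := fun h => rfl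
  have s2 : ∀ h, (ι₂ h).snd = h := fun h => rfl
  have n1 : ∀ h, ‖ι₁ h‖ ^ 2 = ‖h‖ ^ 2 := fun h => by
    rw [WithLp.prod_norm_sq_eq_of_L2, f1, s1]; simp
  have n2 : ∀ h, ‖ι₂ h‖ ^ 2 = ‖h‖ ^ 2 := fun h => by
    rw [WithLp.prod_norm_sq_eq_of_L2, f2, s2]; simp
  have p1 : ∀ h, ⟪p, ι₁ h⟫ = ⟪p.fst, h⟫ := fun h => by
    rw [WithLp.prod_inner_apply]
    change ⟪p.fst, (ι₁ h).fst⟫ + ⟪p.snd, (ι₁ h).snd⟫ = _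
    rw [f1, s1, inner_zero_right, add_zero]
  have p2 : ∀ h, ⟪p, ι₂ h⟫ = ⟪p.snd, h⟫ := fun h => by
    rw [WithLp.prod_inner_apply]
    change ⟪p.fst, (ι₂ h).fst⟫ + ⟪p.snd, (ι₂ h).snd⟫ = _
    rw [f2, s2, inner_zero_right, zero_add]
  have t1 : Tendsto ι₁ (𝓝 0) (𝓝 0) := by simpa using ι₁.continuous.tendsto 0
  have t2 : Tendsto ι₂ (𝓝 0) (𝓝 0) := by simpa using ι₂.continuous.tendsto 0
  set X := (ContinuousLinearMap.adjoint ι₁) ∘L B ∘L ι₁ + A with hX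
  set Y := (ContinuousLinearMap.adjoint ι₂) ∘L B ∘L ι₂ + A with hY
  have X1 : ∀ h, ⟪X h, h⟫ = ⟪B (ι₁ h), ι₁ h⟫ + ⟪A h, h⟫ := fun h => by
    simp only [hX, add_apply, ContinuousLinearMap.comp_apply, inner_add_left,
      ContinuousLinearMap.adjoint_inner_left]
  have Y1 : ∀ h, ⟪Y h, h⟫ = ⟪B (ι₂ h), ι₂ h⟫ + ⟪A h, h⟫ := fun h => by
    simp only [hY, add_apply, ContinuousLinearMap.comp_apply, inner_add_left,
      ContinuousLinearMap.adjoint_inner_left]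
  have w1 : ∀ h, w (ζ + ι₁ h) - w ζ
      = wu (ζ.fst + h) - wu ζ.fst - ⟪A k, h⟫ - 1 / 2 * ⟪A h, h⟫ := fun h => by
    rw [hw, hw, WithLp.add_fst, WithLp.add_snd, f1, s1, add_zero,
      show ζ.fst + h - ζ.snd = k + h by rw [hk]; abel, quadratic_add_of_symm hsymm]
    ring
  have w2 : ∀ h, w (ζ + ι₂ h) - w ζ
      = wv (ζ.snd + h) - wv ζ.snd + ⟪A k, h⟫ - 1 / 2 * ⟪A h, h⟫ := fun h => by
    rw [hw, hw, WithLp.add_fst, WithLp.add_snd, f2, s2, add_zero,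
      show ζ.fst - (ζ.snd + h) = k + (-h) by rw [hk]; abel, quadratic_add_of_symm hsymm]
    have hneg : ⟪A (-h), -h⟫ = ⟪A h, h⟫ := by
      rw [map_neg, inner_neg_neg]
    rw [hneg, inner_neg_right, ← hk]
    ring
  have e1 : ∀ κ > 0, ∀ᶠ h in 𝓝 (0 : E),
      |wu (ζ.fst + h) - wu ζ.fst - ⟪p.fst + A k, h⟫ - 1 / 2 * ⟪X h, h⟫| ≤ κ * ‖h‖ ^ 2 := by
    intro κ hκ
    filter_upwards [t1.eventually (hexp κ hκ)] with h hh
    rw [w1, p1, n1] at hh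
    rw [X1, inner_add_left]
    convert hh using 2
    ring
  have e2 : ∀ κ > 0, ∀ᶠ h in 𝓝 (0 : E),
      |wv (ζ.snd + h) - wv ζ.snd - ⟪p.snd - A k, h⟫ - 1 / 2 * ⟪Y h, h⟫| ≤ κ * ‖h‖ ^ 2 := by
    intro κ hκ
    filter_upwards [t2.eventually (hexp κ hκ)] with h hh
    rw [w2, p2, n2] at hh
    rw [Y1, inner_sub_left]
    convert hh using 2
    ring
  refine ⟨X, Y, fun κ hκ => ?_, fun κ hκ => ?_, fun h h' => ?_⟩
  · filter_upwards [e1 κ hκ] with h hh _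
    linarith [(abs_le.1 hh).2]
  · filter_upwards [e2 κ hκ] with h hh _
    linarith [(abs_le.1 hh).2]
  · have hfst : Tendsto (fun g : WithLp 2 (E × E) => g.fst) (𝓝 0) (𝓝 0) :=
      (WithLp.prod_continuous_ofLp 2 E E).fst.tendsto' _ _ rfl
    have hsnd : Tendsto (fun g : WithLp 2 (E × E) => g.snd) (𝓝 0) (𝓝 0) :=
      (WithLp.prod_continuous_ofLp 2 E E).snd.tendsto' _ _ rfl
    have key := nonpos_of_eventually_quadratic_le (G := WithLp 2 (E × E))
      (Q := fun g => ⟪X g.fst, g.fst⟫ + ⟪Y g.snd, g.snd⟫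
        - ⟪A (g.fst - g.snd), g.fst - g.snd⟫) ?_ ?_ (e (h, h'))
    · change ⟪X h, h⟫ + ⟪Y h', h'⟫ - ⟪A (h - h'), h - h'⟫ ≤ 0 at key
      linarith
    · intro s g
      simp only [WithLp.smul_fst, WithLp.smul_snd, map_smul, real_inner_smul_left,
        inner_smul_right, ← smul_sub]
      ring
    · intro κ hκ
      filter_upwards [hfst.eventually (e1 (κ / 2) (by positivity)),
        hsnd.eventually (e2 (κ / 2) (by positivity))] with g h1 h2
      have h3 := hcontact (ζ + g)
      rw [hw, hw, add_sub_cancel_left, WithLp.add_fst, WithLp.add_snd,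
        show ζ.fst + g.fst - (ζ.snd + g.snd) = k + (g.fst - g.snd) by rw [hk]; abel,
        quadratic_add_of_symm hsymm, WithLp.prod_inner_apply] at h3
      change _ ≤ _ + (⟪p.fst, g.fst⟫ + ⟪p.snd, g.snd⟫) at h3
      rw [WithLp.prod_norm_sq_eq_of_L2]
      have h4 := (abs_le.1 h1).1
      have h5 := (abs_le.1 h2).1
      rw [inner_add_left] at h4
      rw [inner_sub_left] at h5
      rw [inner_sub_right (A k) g.fst g.snd, ← hk] at h3
      linarith

set_option maxHeartbeats 1000000 in
theorem exists_superjets_of_doubling [FiniteDimensional ℝ E] {S : Set E} (hS : IsCompact S)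
    (hne : S.Nonempty) {u v : E → ℝ} (hu : ContinuousOn u S) (hv : ContinuousOn v S)
    (A : E →L[ℝ] E) (hsymm : ∀ x y, ⟪A x, y⟫ = ⟪x, A y⟫) (hpos : ∀ x, 0 ≤ ⟪A x, x⟫)
    {η : ℝ} (hη : 0 < η) :
    ∃ y ∈ S, ∃ y' ∈ S, ∃ (p p' : E) (X Y : E →L[ℝ] E),
      (∀ z ∈ S, ∀ z' ∈ S, u z + v z' - 1 / 2 * ⟪A (z - z'), z - z'⟫
        ≤ u y + v y' - 1 / 2 * ⟪A (y - y'), y - y'⟫ + η) ∧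
      ‖p - A (y - y')‖ ≤ η ∧ ‖p' + A (y - y')‖ ≤ η ∧
      HasSuperjetOn u S y p X ∧ HasSuperjetOn v S y' p' Y ∧
      ∀ h h', ⟪X h, h⟫ + ⟪Y h', h'⟫ ≤ ⟪A (h - h'), h - h'⟫ := by
  obtain ⟨R, hR⟩ := hS.isBounded.exists_norm_le
  have hR0 : 0 ≤ R := by
    obtain ⟨s, hs⟩ := hne
    exact (norm_nonneg _).trans (hR s hs)
  have hdiam : ∀ y ∈ S, ∀ y' ∈ S, ‖y - y'‖ ≤ 2 * R := fun y hy y' hy' => by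
    linarith [norm_sub_le y y', hR y hy, hR y' hy']
  have hquad : ∀ z, ⟪A z, z⟫ ≤ ‖A‖ * ‖z‖ ^ 2 := fun z => by
    calc _ ≤ ‖A z‖ * ‖z‖ := real_inner_le_norm _ _
      _ ≤ ‖A‖ * ‖z‖ * ‖z‖ := by gcongr; exact A.le_opNorm z
      _ = _ := by ring
  set N := (4 * R + 2) * (1 + ‖A‖) with hN
  have hN1 : 1 + ‖A‖ ≤ N := by rw [hN]; nlinarith [norm_nonneg A]
  have hNpos : 0 < N := lt_of_lt_of_le (by positivity) hN1
  set ρ := min 1 (η / N) with hρ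
  have hρ0 : 0 < ρ := by positivity
  have hρ1 : ρ ≤ 1 := min_le_left _ _
  have hρN : ρ * N ≤ η := by
    rw [← le_div_iff₀ hNpos]; exact min_le_right _ _
  set C₀ := 1 / 2 * (‖A‖ * (2 * R) ^ 2) with hC₀
  have hC₀0 : 0 ≤ C₀ := by positivity
  set c := 1 + 4 * (C₀ + 1) / ρ ^ 2 with hc
  have hc1 : 1 ≤ c := by
    have : 0 ≤ 4 * (C₀ + 1) / ρ ^ 2 := by positivity
    linarith
  have hcρ : 4 * (C₀ + 1) ≤ c * ρ ^ 2 := by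
    rw [hc, add_mul, div_mul_cancel₀ _ (by positivity)]
    nlinarith
  have hc0 : 0 < c := by linarith
  obtain ⟨m, wu, hm, hwu, hleu⟩ := exists_sup_convolution hS hne hu c
  obtain ⟨m', wv, hm', hwv, hlev⟩ := exists_sup_convolution hS hne hv c
  set w : WithLp 2 (E × E) → ℝ := fun ζ =>
    wu ζ.fst + wv ζ.snd - 1 / 2 * ⟪A (ζ.fst - ζ.snd), ζ.fst - ζ.snd⟫ with hw
  set q : WithLp 2 (E × E) → WithLp 2 (E × E) := fun ζ =>
    WithLp.toLp 2 ((2 * c) • (m ζ.fst - ζ.fst) - A (ζ.fst - ζ.snd),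
      (2 * c) • (m' ζ.snd - ζ.snd) + A (ζ.fst - ζ.snd)) with hq
  have hslope : ∀ y y', w y + ⟪q y, y' - y⟫ - (2 * c + 2 * ‖A‖) / 2 * ‖y' - y‖ ^ 2 ≤ w y' := by
    intro y y'
    have h1 := sup_convolution_slope hm hwu hleu y.fst y'.fst
    have h2 := sup_convolution_slope hm' hwv hlev y.snd y'.snd
    set a := y'.fst - y.fst with ha
    set b := y'.snd - y.snd with hb
    have h3 := quadratic_add_of_symm hsymm (y.fst - y.snd) (a - b)
    rw [show y.fst - y.snd + (a - b) = y'.fst - y'.snd by rw [ha, hb]; abel] at h3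
    have h4 := hquad (a - b)
    have h5 : ‖a - b‖ ^ 2 ≤ 2 * (‖a‖ ^ 2 + ‖b‖ ^ 2) := by
      nlinarith [norm_sub_le a b, norm_nonneg (a - b), sq_nonneg (‖a‖ - ‖b‖)]
    have h6 : ‖A‖ * ‖a - b‖ ^ 2 ≤ ‖A‖ * (2 * (‖a‖ ^ 2 + ‖b‖ ^ 2)) := by gcongr
    rw [WithLp.prod_norm_sq_eq_of_L2, WithLp.prod_inner_apply, WithLp.sub_fst, WithLp.sub_snd]
    change wu y.fst + wv y.snd - 1 / 2 * ⟪A (y.fst - y.snd), y.fst - y.snd⟫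
      + (⟪(2 * c) • (m y.fst - y.fst) - A (y.fst - y.snd), a⟫
        + ⟪(2 * c) • (m' y.snd - y.snd) + A (y.fst - y.snd), b⟫)
      - (2 * c + 2 * ‖A‖) / 2 * (‖a‖ ^ 2 + ‖b‖ ^ 2)
      ≤ wu y'.fst + wv y'.snd - 1 / 2 * ⟪A (y'.fst - y'.snd), y'.fst - y'.snd⟫
    rw [inner_sub_left, inner_add_left, h3, inner_sub_right (A (y.fst - y.snd)) a b]
    linarith
  have hmax : ∀ p : WithLp 2 (E × E), ‖p‖ ≤ ρ → ∃ ζ, ∀ y, w y ≤ w ζ + ⟪p, y - ζ⟫ := by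
    intro p _
    obtain ⟨y, hy, y', hy', z, z', hmx⟩ :=
      exists_isMax_doubling hS hne hu hv A hpos hc0 p.fst p.snd
    refine ⟨WithLp.toLp 2 (z, z'), fun y₂ => ?_⟩
    have h1 := hmx _ (hm y₂.fst) _ (hm' y₂.snd) y₂.fst y₂.snd
    rw [← hwu, ← hwv] at h1
    have h2 := hleu z y hy
    have h3 := hlev z' y' hy'
    rw [WithLp.prod_inner_apply]
    change wu y₂.fst + wv y₂.snd - 1 / 2 * ⟪A (y₂.fst - y₂.snd), y₂.fst - y₂.snd⟫
      ≤ wu z + wv z' - 1 / 2 * ⟪A (z - z'), z - z'⟫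
        + (⟪p.fst, y₂.fst - z⟫ + ⟪p.snd, y₂.snd - z'⟫)
    rw [inner_sub_right p.fst y₂.fst z, inner_sub_right p.snd y₂.snd z']
    linarith
  obtain ⟨ζ, p, B, hp, hcontact, hexp⟩ :=
    exists_contact_second_order_expansion (by positivity) hslope hρ0 hmax
  obtain ⟨X, Y, hX, hY, hXY⟩ := superjets_of_expansion hsymm (fun _ => rfl) hcontact hexp
  set z := ζ.fst with hz
  set z' := ζ.snd with hz'
  have hpsq : ‖p.fst‖ ^ 2 + ‖p.snd‖ ^ 2 ≤ ρ ^ 2 := by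
    rw [← WithLp.prod_norm_sq_eq_of_L2]; gcongr
  have hp1 : ‖p.fst‖ ≤ ρ := by nlinarith [sq_nonneg ‖p.snd‖, norm_nonneg p.fst]
  have hp2 : ‖p.snd‖ ≤ ρ := by nlinarith [sq_nonneg ‖p.fst‖, norm_nonneg p.snd]
  have hcont' : ∀ x x', wu x + wv x' - 1 / 2 * ⟪A (x - x'), x - x'⟫
      ≤ wu z + wv z' - 1 / 2 * ⟪A (z - z'), z - z'⟫ + ρ * (‖x - z‖ + ‖x' - z'‖) := by
    intro x x'
    have h1 := hcontact (WithLp.toLp 2 (x, x'))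
    rw [WithLp.prod_inner_apply] at h1
    change wu x + wv x' - 1 / 2 * ⟪A (x - x'), x - x'⟫
      ≤ wu z + wv z' - 1 / 2 * ⟪A (z - z'), z - z'⟫ + (⟪p.fst, x - z⟫ + ⟪p.snd, x' - z'⟫) at h1
    have h2 : ⟪p.fst, x - z⟫ ≤ ρ * ‖x - z‖ := (real_inner_le_norm _ _).trans (by gcongr)
    have h3 : ⟪p.snd, x' - z'⟫ ≤ ρ * ‖x' - z'‖ := (real_inner_le_norm _ _).trans (by gcongr)
    linarith
  have hself : ∀ x ∈ S, ∀ x' ∈ S, u x + v x' ≤ wu x + wv x' := by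
    intro x hx x' hx'
    have h1 := hleu x x hx
    have h2 := hlev x' x' hx'
    simp only [sub_self, norm_zero] at h1 h2
    linarith
  set y := m z with hy
  set y' := m' z' with hy'
  have hyS : y ∈ S := hm z
  have hyS' : y' ∈ S := hm' z'
  set d := ‖y - z‖ with hd
  set d' := ‖y' - z'‖ with hd'
  have hd0 : 0 ≤ d := norm_nonneg _
  have hd0' : 0 ≤ d' := norm_nonneg _
  have hdd : d + d' ≤ ρ := by
    have h1 := hcont' y y'
    have h2 := hself y hyS y' hyS'
    have h3 := hwu z
    have h4 := hwv z'
    have h5 := hpos (z - z')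
    have h6 : 1 / 2 * ⟪A (y - y'), y - y'⟫ ≤ C₀ := by
      have h7 := hquad (y - y')
      have h8 : ‖A‖ * ‖y - y'‖ ^ 2 ≤ ‖A‖ * (2 * R) ^ 2 := by
        gcongr; exact hdiam y hyS y' hyS'
      rw [hC₀]; linarith
    have h9 : ρ * (d + d') ≤ d + d' := mul_le_of_le_one_left (by positivity) hρ1
    have h10 : c * (d ^ 2 + d' ^ 2) ≤ C₀ + (d + d') := by linarith
    have h11 : c / 2 * (d ^ 2 + d' ^ 2) ≤ C₀ + 1 := by
      nlinarith [sq_nonneg (d - 1), sq_nonneg (d' - 1), sq_nonneg d, sq_nonneg d']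
    have h12 : c * (d + d') ^ 2 ≤ c * ρ ^ 2 := by nlinarith [sq_nonneg (d - d')]
    have h13 : (d + d') ^ 2 ≤ ρ ^ 2 := le_of_mul_le_mul_left h12 hc0
    exact abs_le_of_sq_le_sq' h13 hρ0.le |>.2
  have hkl : ‖(z - z') - (y - y')‖ ≤ ρ := by
    have : (z - z') - (y - y') = (y' - z') - (y - z) := by abel
    rw [this]
    linarith [norm_sub_le (y' - z') (y - z)]
  have hAkl : ‖A (z - z') - A (y - y')‖ ≤ ‖A‖ * ρ := by
    rw [← map_sub]
    exact (A.le_opNorm _).trans (by gcongr)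
  refine ⟨y, hyS, y', hyS', p.fst + A (z - z'), p.snd - A (z - z'), X, Y, ?_, ?_, ?_,
    sup_convolution_superjet hwu hleu hX, sup_convolution_superjet hwv hlev hY, hXY⟩
  · intro x hx x' hx'
    have h1 := hcont' x x'
    have h2 := hself x hx x' hx'
    have h3 := hwu z
    have h4 := hwv z'
    have h5 : ‖x - z‖ ≤ 2 * R + d := by
      have : x - z = (x - y) + (y - z) := by abel
      rw [this]
      linarith [norm_add_le (x - y) (y - z), hdiam x hx y hyS]
    have h6 : ‖x' - z'‖ ≤ 2 * R + d' := by
      have : x' - z' = (x' - y') + (y' - z') := by abel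
      rw [this]
      linarith [norm_add_le (x' - y') (y' - z'), hdiam x' hx' y' hyS']
    have h7 : ρ * (‖x - z‖ + ‖x' - z'‖) ≤ ρ * (4 * R + 1) :=
      mul_le_mul_of_nonneg_left (by linarith) hρ0.le
    have h8 : ⟪A (y - y'), y - y'⟫ ≤ ⟪A (z - z'), z - z'⟫ + ‖A‖ * (4 * R) * ρ := by
      have h9 := quadratic_add_of_symm hsymm (y - y') ((z - z') - (y - y'))
      rw [add_sub_cancel] at h9
      have h10 := hpos ((z - z') - (y - y'))
      have h11 : -⟪A (y - y'), (z - z') - (y - y')⟫ ≤ ‖A‖ * (2 * R) * ρ := by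
        refine (neg_le_abs _).trans ((abs_real_inner_le_norm _ _).trans ?_)
        gcongr
        exact (A.le_opNorm _).trans (by gcongr; exact hdiam y hyS y' hyS')
      linarith
    have h12 : ρ * (4 * R + 1) + 1 / 2 * (‖A‖ * (4 * R) * ρ) ≤ ρ * N := by
      rw [hN]
      have : 0 ≤ ρ * (‖A‖ * R) := by positivity
      have : 0 ≤ ρ * ‖A‖ := by positivity
      nlinarith
    have : 0 ≤ c * d ^ 2 := by positivity
    have : 0 ≤ c * d' ^ 2 := by positivity
    linarith
  · have : p.fst + A (z - z') - A (y - y') = p.fst + (A (z - z') - A (y - y')) := by abel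
    rw [this]
    refine (norm_add_le _ _).trans (le_trans ?_ hρN)
    nlinarith
  · have : p.snd - A (z - z') + A (y - y') = p.snd - (A (z - z') - A (y - y')) := by abel
    rw [this]
    refine (norm_sub_le _ _).trans (le_trans ?_ hρN)
    nlinarith

end Doubling

section TestFunctions

variable {n d : ℕ}

/-- The `k`-th column of a matrix, as a Euclidean vector. -/
def euclColumn (M : Matrix (Fin n) (Fin d) ℝ) (k : Fin d) : Eucl n :=
  WithLp.toLp 2 fun i => M i k

/-- The second derivative of `φ t` at `x` in the direction `m`. -/
def secondDirDeriv (φ : ℝ → Eucl n → ℝ) (t : ℝ) (x m : Eucl n) : ℝ :=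
  deriv (deriv fun s : ℝ => φ t (x + s • m)) 0

theorem sum_norm_euclColumn_sq (M : Matrix (Fin n) (Fin d) ℝ) :
    ∑ k, ‖euclColumn M k‖ ^ 2 = ‖M‖ ^ 2 := by
  rw [Matrix.frobenius_norm_def, ← Real.sqrt_eq_rpow, Real.sq_sqrt (by positivity),
    Finset.sum_comm]
  simp [EuclideanSpace.norm_sq_eq, euclColumn]

theorem euclColumn_sub (M N : Matrix (Fin n) (Fin d) ℝ) (k : Fin d) :
    euclColumn (M - N) k = euclColumn M k - euclColumn N k := rfl

theorem rowMul_apply (p : Eucl n) (M : Matrix (Fin n) (Fin d) ℝ) (k : Fin d) :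
    rowMul p M k = ⟪p, euclColumn M k⟫ := by
  simp [rowMul, euclColumn, PiLp.inner_apply, mul_comm]

theorem norm_rowMul_le (p : Eucl n) (M : Matrix (Fin n) (Fin d) ℝ) :
    ‖rowMul p M‖ ≤ ‖p‖ * ‖M‖ := by
  refine abs_le_of_sq_le_sq' ?_ (by positivity) |>.2
  rw [EuclideanSpace.norm_sq_eq, mul_pow, ← sum_norm_euclColumn_sq, Finset.mul_sum]
  refine Finset.sum_le_sum fun k _ => ?_
  rw [rowMul_apply, ← mul_pow]
  gcongr
  exact norm_inner_le_norm _ _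

theorem rowMul_add_left (p q : Eucl n) (M : Matrix (Fin n) (Fin d) ℝ) :
    rowMul (p + q) M = rowMul p M + rowMul q M := by
  ext k
  simp only [rowMul_apply, PiLp.add_apply, inner_add_left]

theorem rowMul_sub_left (p q : Eucl n) (M : Matrix (Fin n) (Fin d) ℝ) :
    rowMul (p - q) M = rowMul p M - rowMul q M := by
  ext k
  simp only [rowMul_apply, PiLp.sub_apply, inner_sub_left]

theorem rowMul_sub_right (p : Eucl n) (M N : Matrix (Fin n) (Fin d) ℝ) :
    rowMul p (M - N) = rowMul p M - rowMul p N := by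
  ext k
  simp only [rowMul_apply, PiLp.sub_apply, euclColumn_sub, inner_sub_right]

theorem continuous_rowMul (p : Eucl n) :
    Continuous fun M : Matrix (Fin n) (Fin d) ℝ => rowMul p M := by
  refine (PiLp.continuous_toLp 2 _).comp (continuous_pi fun j => ?_)
  fun_prop

theorem continuous_euclColumn (k : Fin d) :
    Continuous fun M : Matrix (Fin n) (Fin d) ℝ => euclColumn M k := by
  refine (PiLp.continuous_toLp 2 _).comp (continuous_pi fun j => ?_)
  fun_prop

section

variable {φ θ : ℝ → Eucl n → ℝ}

theorem contDiff_slice {m : WithTop ℕ∞} (hφ : ContDiff ℝ m fun q : ℝ × Eucl n => φ q.1 q.2) (t : ℝ) :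
    ContDiff ℝ m (φ t) :=
  hφ.comp (contDiff_const.prodMk contDiff_id)

theorem contDiff_line {m : WithTop ℕ∞} (hφ : ContDiff ℝ m fun q : ℝ × Eucl n => φ q.1 q.2) (t : ℝ)
    (x e : Eucl n) : ContDiff ℝ m fun s : ℝ => φ t (x + s • e) :=
  (contDiff_slice hφ t).comp (by fun_prop)

theorem inner_spaceGrad (hφ : ContDiff ℝ 3 fun q : ℝ × Eucl n => φ q.1 q.2) (t : ℝ)
    (x e : Eucl n) : ⟪spaceGrad φ t x, e⟫ = deriv (fun s : ℝ => φ t (x + s • e)) 0 := by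
  have h1 : DifferentiableAt ℝ (φ t) x :=
    (contDiff_slice hφ t).differentiable (by norm_num) x
  rw [spaceGrad, gradient, InnerProductSpace.toDual_symm_apply]
  have h2 : HasDerivAt (fun s : ℝ => x + s • e) e 0 := by
    simpa using ((hasDerivAt_id (0 : ℝ)).smul_const e).const_add x
  have h3 : HasFDerivAt (φ t) (fderiv ℝ (φ t) x) (x + (0 : ℝ) • e) := by
    simpa using h1.hasFDerivAt
  exact (h3.comp_hasDerivAt (0 : ℝ) h2).deriv.symm

theorem spaceHess_apply (hφ : ContDiff ℝ 3 fun q : ℝ × Eucl n => φ q.1 q.2) (t : ℝ)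
    (x : Eucl n) (i j : Fin n) : spaceHess φ t x i j =
      fderiv ℝ (fderiv ℝ (φ t)) x (EuclideanSpace.single i 1) (EuclideanSpace.single j 1) := by
  have h1 : DifferentiableAt ℝ (fderiv ℝ (φ t)) x :=
    ((contDiff_slice hφ t).fderiv_right (m := 2) (by norm_num)).differentiable (by norm_num) x
  rw [spaceHess, Matrix.of_apply]
  rw [fderiv_clm_apply h1 (differentiableAt_const _)]
  simp

theorem isSymm_spaceHess (hφ : ContDiff ℝ 3 fun q : ℝ × Eucl n => φ q.1 q.2) (t : ℝ)
    (x : Eucl n) : (spaceHess φ t x).IsSymm := by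
  ext i j
  rw [Matrix.transpose_apply, spaceHess_apply hφ, spaceHess_apply hφ]
  exact ((contDiff_slice hφ t).contDiffAt.isSymmSndFDerivAt (by simp; norm_num)).eq _ _

theorem secondDirDeriv_eq (hφ : ContDiff ℝ 3 fun q : ℝ × Eucl n => φ q.1 q.2) (t : ℝ)
    (x e : Eucl n) : secondDirDeriv φ t x e = fderiv ℝ (fderiv ℝ (φ t)) x e e := by
  have h0 : Differentiable ℝ (φ t) := (contDiff_slice hφ t).differentiable (by norm_num)
  have h1 : DifferentiableAt ℝ (fderiv ℝ (φ t)) x :=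
    ((contDiff_slice hφ t).fderiv_right (m := 2) (by norm_num)).differentiable (by norm_num) x
  have h2 : ∀ s : ℝ, HasDerivAt (fun s : ℝ => x + s • e) e s := fun s => by
    simpa using ((hasDerivAt_id s).smul_const e).const_add x
  have h3 : (deriv fun s : ℝ => φ t (x + s • e)) = fun s => fderiv ℝ (φ t) (x + s • e) e :=
    funext fun s => ((h0 _).hasFDerivAt.comp_hasDerivAt s (h2 s)).deriv
  have h4 : HasFDerivAt (fderiv ℝ (φ t)) (fderiv ℝ (fderiv ℝ (φ t)) x) (x + (0 : ℝ) • e) := by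
    simpa using h1.hasFDerivAt
  have h5 : HasDerivAt (fun s : ℝ => fderiv ℝ (φ t) (x + s • e))
      (fderiv ℝ (fderiv ℝ (φ t)) x e) 0 := h4.comp_hasDerivAt (0 : ℝ) (h2 0)
  have h6 : HasDerivAt (fun s : ℝ => fderiv ℝ (φ t) (x + s • e) e)
      (fderiv ℝ (fderiv ℝ (φ t)) x e e) 0 :=
    (ContinuousLinearMap.apply ℝ ℝ e).hasFDerivAt.comp_hasDerivAt (0 : ℝ) h5
  rw [secondDirDeriv, h3]
  exact h6.deriv

theorem sum_smul_single (m : Eucl n) : ∑ i, m i • EuclideanSpace.single i (1 : ℝ) = m := by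
  ext j
  simp [Finset.sum_apply, Pi.single_apply]

theorem trace_mul_spaceHess (hφ : ContDiff ℝ 3 fun q : ℝ × Eucl n => φ q.1 q.2) (t : ℝ)
    (x : Eucl n) (M : Matrix (Fin n) (Fin d) ℝ) :
    Matrix.trace (M * Mᵀ * spaceHess φ t x) = ∑ k, secondDirDeriv φ t x (euclColumn M k) := by
  have h1 : ∀ k, secondDirDeriv φ t x (euclColumn M k)
      = ∑ i, ∑ j, M i k * M j k * spaceHess φ t x i j := by
    intro k
    rw [secondDirDeriv_eq hφ]
    conv_lhs => rw [← sum_smul_single (euclColumn M k)]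
    simp only [map_sum, map_smul, sum_apply, smul_apply,
      smul_eq_mul, Finset.mul_sum, spaceHess_apply hφ]
    rw [Finset.sum_comm]
    refine Finset.sum_congr rfl fun i _ => Finset.sum_congr rfl fun j _ => ?_
    simp only [euclColumn]
    ring
  simp only [h1, Matrix.trace, Matrix.diag_apply, Matrix.mul_apply, Matrix.transpose_apply,
    Finset.sum_mul]
  calc ∑ j, ∑ i, ∑ k, M j k * M i k * spaceHess φ t x i j
      = ∑ i, ∑ j, ∑ k, M j k * M i k * spaceHess φ t x i j := Finset.sum_comm
    _ = ∑ i, ∑ j, ∑ k, M i k * M j k * spaceHess φ t x i j :=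
        Finset.sum_congr rfl fun i _ => Finset.sum_congr rfl fun j _ =>
          Finset.sum_congr rfl fun k _ => by ring
    _ = ∑ i, ∑ k, ∑ j, M i k * M j k * spaceHess φ t x i j :=
        Finset.sum_congr rfl fun i _ => Finset.sum_comm
    _ = _ := Finset.sum_comm

theorem secondDirDeriv_add (hφ : ContDiff ℝ 3 fun q : ℝ × Eucl n => φ q.1 q.2)
    (hθ : ContDiff ℝ 3 fun q : ℝ × Eucl n => θ q.1 q.2) (t : ℝ) (x e : Eucl n) :
    secondDirDeriv (fun s y => φ s y + θ s y) t x e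
      = secondDirDeriv φ t x e + secondDirDeriv θ t x e := by
  have h1 := contDiff_line hφ t x e
  have h2 := contDiff_line hθ t x e
  have h3 : (deriv fun s : ℝ => φ t (x + s • e) + θ t (x + s • e))
      = fun s => deriv (fun s : ℝ => φ t (x + s • e)) s + deriv (fun s : ℝ => θ t (x + s • e)) s :=
    funext fun s => deriv_fun_add (h1.differentiable (by norm_num) s)
      (h2.differentiable (by norm_num) s)
  rw [secondDirDeriv, h3]
  exact deriv_fun_add ((h1.of_le (by norm_num)).differentiable_deriv_two 0)
    ((h2.of_le (by norm_num)).differentiable_deriv_two 0)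

theorem spaceGrad_add (hφ : ContDiff ℝ 3 fun q : ℝ × Eucl n => φ q.1 q.2)
    (hθ : ContDiff ℝ 3 fun q : ℝ × Eucl n => θ q.1 q.2) (t : ℝ) (x : Eucl n) :
    spaceGrad (fun s y => φ s y + θ s y) t x = spaceGrad φ t x + spaceGrad θ t x := by
  have h1 := (contDiff_slice hφ t).differentiable (by norm_num) x
  have h2 := (contDiff_slice hθ t).differentiable (by norm_num) x
  simp only [spaceGrad, gradient]
  rw [fderiv_fun_add h1 h2, map_add]

theorem timeDeriv_add (hφ : ContDiff ℝ 3 fun q : ℝ × Eucl n => φ q.1 q.2)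
    (hθ : ContDiff ℝ 3 fun q : ℝ × Eucl n => θ q.1 q.2) (t : ℝ) (x : Eucl n) :
    timeDeriv (fun s y => φ s y + θ s y) t x = timeDeriv φ t x + timeDeriv θ t x := by
  have h : ∀ {ψ : ℝ → Eucl n → ℝ}, (ContDiff ℝ 3 fun q : ℝ × Eucl n => ψ q.1 q.2) →
      DifferentiableAt ℝ (fun s => ψ s x) t := fun {ψ} hψ =>
    (hψ.comp (contDiff_id.prodMk contDiff_const) : ContDiff ℝ 3 fun s : ℝ => ψ s x).differentiable
      (by norm_num) t
  exact deriv_fun_add (h hφ) (h hθ)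

/-- Every smooth function agrees near any point with an admissible test function. -/
theorem exists_isTestFunction_eventuallyEq (hφ : ContDiff ℝ 3 fun q : ℝ × Eucl n => φ q.1 q.2)
    (t : ℝ) (x : Eucl n) : ∃ φ' : ℝ → Eucl n → ℝ, IsTestFunction φ' ∧
      (fun q : ℝ × Eucl n => φ' q.1 q.2) =ᶠ[𝓝 (t, x)] fun q => φ q.1 q.2 := by
  let g : ContDiffBump ((t, x) : ℝ × Eucl n) := ⟨1, 2, one_pos, one_lt_two⟩
  refine ⟨fun s y => g (s, y) * φ s y, ?_, ?_⟩
  · have hsm : ContDiff ℝ 3 fun q : ℝ × Eucl n => g q * φ q.1 q.2 := g.contDiff.mul hφ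
    refine ⟨hsm, fun i _ hi => ?_⟩
    have hc : HasCompactSupport fun q : ℝ × Eucl n => g q * φ q.1 q.2 :=
      g.hasCompactSupport.mul_right
    have hci := hc.iteratedFDeriv (𝕜 := ℝ) i
    exact hci.exists_bound_of_continuous (hsm.continuous_iteratedFDeriv (by exact_mod_cast hi))
  · filter_upwards [g.eventuallyEq_one] with q hq
    rw [show g (q.1, q.2) = 1 from hq, one_mul]

end
end TestFunctions

section ViscosityJets

variable {n d : ℕ}

/-- Space-time with its Euclidean structure. -/
abbrev SpaceTime (n : ℕ) := WithLp 2 (ℝ × Eucl n)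

/-- The embedding of space directions into space-time. -/
def spaceDir (m : Eucl n) : SpaceTime n := WithLp.toLp 2 (0, m)

theorem spaceTime_ext {z z' : SpaceTime n} (h1 : z.fst = z'.fst) (h2 : z.snd = z'.snd) : z = z' :=
  WithLp.ofLp_injective 2 (Prod.ext h1 h2)

theorem norm_spaceDir (m : Eucl n) : ‖spaceDir m‖ = ‖m‖ := by
  simp [spaceDir]

theorem spaceDir_sub (m m' : Eucl n) : spaceDir (m - m') = spaceDir m - spaceDir m' := by
  refine spaceTime_ext ?_ ?_ <;> simp [spaceDir]

theorem inner_spaceDir (p : SpaceTime n) (m : Eucl n) : ⟪p, spaceDir m⟫ = ⟪p.snd, m⟫ := by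
  rw [WithLp.prod_inner_apply]
  simp [spaceDir]

/-- The quadratic function `⟪p, h⟫ + ½⟪X h, h⟫ + κ|h|²` with `h = (s, y) - z`. -/
def quadTest (z p : SpaceTime n) (X : SpaceTime n →L[ℝ] SpaceTime n) (κ : ℝ) (s : ℝ)
    (y : Eucl n) : ℝ :=
  ⟪p, WithLp.toLp 2 (s, y) - z⟫
    + 1 / 2 * ⟪X (WithLp.toLp 2 (s, y) - z), WithLp.toLp 2 (s, y) - z⟫
    + κ * ‖(WithLp.toLp 2 (s, y) - z : SpaceTime n)‖ ^ 2

theorem contDiff_quadTest {m : WithTop ℕ∞} (z p : SpaceTime n)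
    (X : SpaceTime n →L[ℝ] SpaceTime n) (κ : ℝ) :
    ContDiff ℝ m fun q : ℝ × Eucl n => quadTest z p X κ q.1 q.2 := by
  have h : ContDiff ℝ m fun q : ℝ × Eucl n => (WithLp.toLp 2 (q.1, q.2) - z : SpaceTime n) :=
    (WithLp.prodContinuousLinearEquiv 2 ℝ ℝ (Eucl n)).symm.contDiff.sub contDiff_const
  exact ((contDiff_const.inner ℝ h).add
    (contDiff_const.mul ((X.contDiff.comp h).inner ℝ h))).add (contDiff_const.mul (h.norm_sq ℝ))

theorem deriv_quadratic (a b : ℝ) :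
    deriv (fun s : ℝ => s * a + s ^ 2 * b) = fun s => a + 2 * s * b := by
  funext s
  have h := ((hasDerivAt_id s).mul_const a).add ((hasDerivAt_pow 2 s).mul_const b)
  refine (h.deriv).trans ?_
  simp

theorem quadTest_line (t : ℝ) (x : Eucl n) (p : SpaceTime n) (X : SpaceTime n →L[ℝ] SpaceTime n)
    (κ : ℝ) (m : Eucl n) : (fun s : ℝ => quadTest (WithLp.toLp 2 (t, x)) p X κ t (x + s • m))
      = fun s => s * ⟪p.snd, m⟫
        + s ^ 2 * (1 / 2 * ⟪X (spaceDir m), spaceDir m⟫ + κ * ‖m‖ ^ 2) := by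
  funext s
  have h : (WithLp.toLp 2 (t, x + s • m) - WithLp.toLp 2 (t, x) : SpaceTime n)
      = s • spaceDir m := by
    refine spaceTime_ext ?_ ?_ <;> simp [spaceDir]
  rw [quadTest, h, map_smul, inner_smul_right, inner_smul_right, real_inner_smul_left,
    inner_spaceDir, norm_smul, norm_spaceDir, mul_pow, Real.norm_eq_abs, sq_abs]
  ring

theorem secondDirDeriv_quadTest (t : ℝ) (x : Eucl n) (p : SpaceTime n)
    (X : SpaceTime n →L[ℝ] SpaceTime n) (κ : ℝ) (m : Eucl n) :
    secondDirDeriv (quadTest (WithLp.toLp 2 (t, x)) p X κ) t x m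
      = ⟪X (spaceDir m), spaceDir m⟫ + 2 * κ * ‖m‖ ^ 2 := by
  rw [secondDirDeriv, quadTest_line, deriv_quadratic]
  have h := (((hasDerivAt_id (0 : ℝ)).const_mul 2).mul_const
    (1 / 2 * ⟪X (spaceDir m), spaceDir m⟫ + κ * ‖m‖ ^ 2)).const_add ⟪p.snd, m⟫
  refine h.deriv.trans ?_
  ring

theorem spaceGrad_quadTest (t : ℝ) (x : Eucl n) (p : SpaceTime n)
    (X : SpaceTime n →L[ℝ] SpaceTime n) (κ : ℝ) :
    spaceGrad (quadTest (WithLp.toLp 2 (t, x)) p X κ) t x = p.snd := by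
  refine ext_inner_right ℝ fun m => ?_
  rw [inner_spaceGrad (contDiff_quadTest _ p X κ), quadTest_line, deriv_quadratic]
  simp

theorem timeDeriv_quadTest (t : ℝ) (x : Eucl n) (p : SpaceTime n)
    (X : SpaceTime n →L[ℝ] SpaceTime n) (κ : ℝ) :
    timeDeriv (quadTest (WithLp.toLp 2 (t, x)) p X κ) t x = p.fst := by
  set e : SpaceTime n := WithLp.toLp 2 ((1 : ℝ), (0 : Eucl n)) with he
  have h : (fun s : ℝ => quadTest (WithLp.toLp 2 (t, x)) p X κ s x)
      = fun s => (s - t) * p.fst + (s - t) ^ 2 * (1 / 2 * ⟪X e, e⟫ + κ * ‖e‖ ^ 2) := by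
    funext s
    have h : (WithLp.toLp 2 (s, x) - WithLp.toLp 2 (t, x) : SpaceTime n) = (s - t) • e := by
      refine spaceTime_ext ?_ ?_ <;> simp [he]
    have h' : ⟪p, e⟫ = p.fst := by
      rw [WithLp.prod_inner_apply]
      simp [he]
    rw [quadTest, h, map_smul, inner_smul_right, inner_smul_right, real_inner_smul_left, norm_smul,
      mul_pow, Real.norm_eq_abs, sq_abs, h']
    ring
  rw [timeDeriv, h]
  have := deriv_comp_sub_const (f := fun s : ℝ => s * p.fst
    + s ^ 2 * (1 / 2 * ⟪X e, e⟫ + κ * ‖e‖ ^ 2)) (a := t) (x := t)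
  rw [this, deriv_quadratic]
  simp

variable {T : ℝ} {G : ℝ → Eucl n → ℝ → Eucl n → Matrix (Fin n) (Fin n) ℝ → ℝ} {g : Eucl n → ℝ}
  {w φ θ : ℝ → Eucl n → ℝ}

theorem derivs_eq_of_eventuallyEq {φ' : ℝ → Eucl n → ℝ} {t : ℝ} {x : Eucl n}
    (h : (fun q : ℝ × Eucl n => φ' q.1 q.2) =ᶠ[𝓝 (t, x)] fun q => φ q.1 q.2) :
    φ' t x = φ t x ∧ timeDeriv φ' t x = timeDeriv φ t x ∧ spaceGrad φ' t x = spaceGrad φ t x ∧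
      spaceHess φ' t x = spaceHess φ t x := by
  have ht : Tendsto (fun s : ℝ => (s, x)) (𝓝 t) (𝓝 (t, x)) :=
    (Continuous.prodMk_left x).tendsto t
  have hx : Tendsto (fun y : Eucl n => (t, y)) (𝓝 x) (𝓝 (t, x)) :=
    (Continuous.prodMk_right t).tendsto x
  have h1 : (fun s => φ' s x) =ᶠ[𝓝 t] fun s => φ s x := ht.eventually h
  have h2 : φ' t =ᶠ[𝓝 x] φ t := hx.eventually h
  refine ⟨h.eq_of_nhds, h1.deriv_eq, ?_, ?_⟩
  · simp only [spaceGrad, gradient]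
    rw [Filter.EventuallyEq.fderiv_eq h2]
  · ext i j
    simp only [spaceHess, Matrix.of_apply]
    have h3 : (fun y => fderiv ℝ (φ' t) y (EuclideanSpace.single j (1 : ℝ)))
        =ᶠ[𝓝 x] fun y => fderiv ℝ (φ t) y (EuclideanSpace.single j (1 : ℝ)) :=
      (h2.fderiv (𝕜 := ℝ)).mono fun y hy => by simp only [hy]
    rw [h3.fderiv_eq]

theorem spaceGrad_add_const (c : ℝ) (t : ℝ) (x : Eucl n) :
    spaceGrad (fun s y => φ s y + c) t x = spaceGrad φ t x := by
  simp only [spaceGrad, gradient, fderiv_add_const]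

theorem spaceHess_add_const (c : ℝ) (t : ℝ) (x : Eucl n) :
    spaceHess (fun s y => φ s y + c) t x = spaceHess φ t x := by
  simp only [spaceHess, fderiv_add_const]

theorem timeDeriv_add_const (c : ℝ) (t : ℝ) (x : Eucl n) :
    timeDeriv (fun s y => φ s y + c) t x = timeDeriv φ t x := by
  simp only [timeDeriv, deriv_add_const]

/-- The differential inequality of a subsolution holds for every smooth function touching locally
from above, and for any value of the zeroth order variable. -/
theorem IsViscositySubsolution.of_isLocalMax (hw : IsViscositySubsolution T G g w)
    (hφ : ContDiff ℝ 3 fun q : ℝ × Eucl n => φ q.1 q.2) {t : ℝ} (ht : t ∈ Ico 0 T) {x : Eucl n}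
    (hmax : ∀ᶠ q in 𝓝 (t, x), w q.1 q.2 - φ q.1 q.2 ≤ w t x - φ t x) (y : ℝ) :
    0 ≤ timeDeriv φ t x + G t x y (spaceGrad φ t x) (spaceHess φ t x) := by
  obtain ⟨φ', hφ', heq⟩ := exists_isTestFunction_eventuallyEq
    (φ := fun s z => φ s z + (y - φ t x)) (hφ.add contDiff_const) t x
  obtain ⟨h0, h1, h2, h3⟩ := derivs_eq_of_eventuallyEq (φ := fun s z => φ s z + (y - φ t x)) heq
  have key := hw.2 φ' hφ' t ht x ?_
  · rw [h0, h1, h2, h3, spaceGrad_add_const, spaceHess_add_const, timeDeriv_add_const] at key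
    simpa using key
  · refine eventually_nhdsWithin_of_eventually_nhds ?_
    filter_upwards [hmax, heq] with q hq hq'
    rw [hq', h0]
    linarith

/-- The differential inequality of a supersolution holds for every smooth function touching locally
from below, and for any value of the zeroth order variable. -/
theorem IsViscositySupersolution.of_isLocalMin (hw : IsViscositySupersolution T G g w)
    (hφ : ContDiff ℝ 3 fun q : ℝ × Eucl n => φ q.1 q.2) {t : ℝ} (ht : t ∈ Ico 0 T) {x : Eucl n}
    (hmin : ∀ᶠ q in 𝓝 (t, x), w t x - φ t x ≤ w q.1 q.2 - φ q.1 q.2) (y : ℝ) :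
    timeDeriv φ t x + G t x y (spaceGrad φ t x) (spaceHess φ t x) ≤ 0 := by
  obtain ⟨φ', hφ', heq⟩ := exists_isTestFunction_eventuallyEq
    (φ := fun s z => φ s z + (y - φ t x)) (hφ.add contDiff_const) t x
  obtain ⟨h0, h1, h2, h3⟩ := derivs_eq_of_eventuallyEq (φ := fun s z => φ s z + (y - φ t x)) heq
  have key := hw.2 φ' hφ' t ht x ?_
  · rw [h0, h1, h2, h3, spaceGrad_add_const, spaceHess_add_const, timeDeriv_add_const] at key
    simpa using key
  · refine eventually_nhdsWithin_of_eventually_nhds ?_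
    filter_upwards [hmin, heq] with q hq hq'
    rw [hq', h0]
    linarith

/-- Near an interior point, a superjet yields a quadratic function touching from above. -/
theorem HasSuperjetOn.eventually_sub_quadTest_le {v : ℝ → Eucl n → ℝ} {S : Set (SpaceTime n)}
    {t : ℝ} {x : Eucl n} {p : SpaceTime n} {X : SpaceTime n →L[ℝ] SpaceTime n}
    (hv : HasSuperjetOn (fun z : SpaceTime n => v z.fst z.snd) S (WithLp.toLp 2 (t, x)) p X)
    (hS : S ∈ 𝓝 (WithLp.toLp 2 (t, x))) {κ : ℝ} (hκ : 0 < κ) :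
    ∀ᶠ q in 𝓝 (t, x), v q.1 q.2 ≤ v t x + quadTest (WithLp.toLp 2 (t, x)) p X κ q.1 q.2 := by
  have hc : Continuous fun q : ℝ × Eucl n => (WithLp.toLp 2 q : SpaceTime n) :=
    WithLp.prod_continuous_toLp 2 ℝ (Eucl n)
  have h1 : Tendsto (fun q : ℝ × Eucl n => (WithLp.toLp 2 q - WithLp.toLp 2 (t, x) : SpaceTime n))
      (𝓝 (t, x)) (𝓝 0) :=
    (hc.sub continuous_const).tendsto' _ _ (sub_self _)
  filter_upwards [h1.eventually (hv κ hκ), (hc.tendsto (t, x)).eventually hS] with q hq hqS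
  rw [add_sub_cancel] at hq
  have := hq hqS
  simp only [quadTest]
  change v q.1 q.2 ≤ v t x + _ + _ + _ at this
  linarith

variable {U V : Type*} {b : ℝ → Eucl n → U → V → Eucl n}
  {σ : ℝ → Eucl n → U → V → Matrix (Fin n) (Fin d) ℝ}
  {f : ℝ → Eucl n → ℝ → Eucl d → U → V → ℝ}

theorem lowerHamiltonian_derivs (hφ : ContDiff ℝ 3 fun q : ℝ × Eucl n => φ q.1 q.2) (t : ℝ)
    (x : Eucl n) (y : ℝ) :
    lowerHamiltonian b σ f t x y (spaceGrad φ t x) (spaceHess φ t x)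
      = ⨆ u, ⨅ v, 1 / 2 * ∑ k, secondDirDeriv φ t x (euclColumn (σ t x u v) k)
        + ⟪spaceGrad φ t x, b t x u v⟫ + f t x y (rowMul (spaceGrad φ t x) (σ t x u v)) u v := by
  simp only [lowerHamiltonian, trace_mul_spaceHess hφ]

theorem IsViscositySubsolution.of_superjet
    (hw : IsViscositySubsolution T (lowerHamiltonian b σ f) g w)
    (hθ : ContDiff ℝ 3 fun q : ℝ × Eucl n => θ q.1 q.2) {t : ℝ} (ht : t ∈ Ico 0 T) {x : Eucl n}
    {S : Set (SpaceTime n)} {p : SpaceTime n} {X : SpaceTime n →L[ℝ] SpaceTime n}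
    (hj : HasSuperjetOn (fun z : SpaceTime n => w z.fst z.snd - θ z.fst z.snd) S
      (WithLp.toLp 2 (t, x)) p X)
    (hS : S ∈ 𝓝 (WithLp.toLp 2 (t, x))) {κ : ℝ} (hκ : 0 < κ) :
    0 ≤ timeDeriv θ t x + p.fst + ⨆ u, ⨅ v,
      1 / 2 * ∑ k, (secondDirDeriv θ t x (euclColumn (σ t x u v) k)
        + (⟪X (spaceDir (euclColumn (σ t x u v) k)), spaceDir (euclColumn (σ t x u v) k)⟫
          + 2 * κ * ‖euclColumn (σ t x u v) k‖ ^ 2))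
      + ⟪spaceGrad θ t x + p.snd, b t x u v⟫
      + f t x 0 (rowMul (spaceGrad θ t x + p.snd) (σ t x u v)) u v := by
  set Q := quadTest (WithLp.toLp 2 (t, x)) p X κ with hQ
  have hQs : ContDiff ℝ 3 fun q : ℝ × Eucl n => Q q.1 q.2 := contDiff_quadTest _ p X κ
  have hloc := hj.eventually_sub_quadTest_le (v := fun s y => w s y - θ s y) hS hκ
  have hQ0 : Q t x = 0 := by simp [hQ, quadTest]
  have key := hw.of_isLocalMax (φ := fun s y => θ s y + Q s y) (hθ.add hQs) ht
    (by filter_upwards [hloc] with q hq; rw [hQ0]; linarith) 0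
  rw [lowerHamiltonian_derivs (hθ.add hQs), timeDeriv_add hθ hQs, spaceGrad_add hθ hQs,
    timeDeriv_quadTest, spaceGrad_quadTest] at key
  simp only [secondDirDeriv_add hθ hQs] at key
  simpa only [hQ, secondDirDeriv_quadTest] using key

theorem IsViscositySupersolution.of_superjet
    (hw : IsViscositySupersolution T (lowerHamiltonian b σ f) g w)
    {t : ℝ} (ht : t ∈ Ico 0 T) {x : Eucl n}
    {S : Set (SpaceTime n)} {p : SpaceTime n} {X : SpaceTime n →L[ℝ] SpaceTime n}
    (hj : HasSuperjetOn (fun z : SpaceTime n => -w z.fst z.snd) S (WithLp.toLp 2 (t, x)) p X)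
    (hS : S ∈ 𝓝 (WithLp.toLp 2 (t, x))) {κ : ℝ} (hκ : 0 < κ) :
    -p.fst + (⨆ u, ⨅ v,
      1 / 2 * ∑ k, -(⟪X (spaceDir (euclColumn (σ t x u v) k)), spaceDir (euclColumn (σ t x u v) k)⟫
          + 2 * κ * ‖euclColumn (σ t x u v) k‖ ^ 2)
      + ⟪-p.snd, b t x u v⟫ + f t x 0 (rowMul (-p.snd) (σ t x u v)) u v) ≤ 0 := by
  set Q := quadTest (WithLp.toLp 2 (t, x)) (-p) (-X) (-κ) with hQ
  have hQs : ContDiff ℝ 3 fun q : ℝ × Eucl n => Q q.1 q.2 := contDiff_quadTest _ _ _ _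
  have hQn : ∀ s y, Q s y = -quadTest (WithLp.toLp 2 (t, x)) p X κ s y := fun s y => by
    simp only [hQ, quadTest, inner_neg_left, neg_apply]
    ring
  have hloc := hj.eventually_sub_quadTest_le (v := fun s y => -w s y) hS hκ
  have hQ0 : Q t x = 0 := by simp [hQ, quadTest]
  have key := hw.of_isLocalMin hQs ht
    (by filter_upwards [hloc] with q hq; rw [hQ0, hQn]; linarith) 0
  rw [lowerHamiltonian_derivs hQs, timeDeriv_quadTest, spaceGrad_quadTest] at key
  simp only [hQ, secondDirDeriv_quadTest] at key
  have hneg : ∀ m : Eucl n, ⟪(-X) (spaceDir m), spaceDir m⟫ + 2 * -κ * ‖m‖ ^ 2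
      = -(⟪X (spaceDir m), spaceDir m⟫ + 2 * κ * ‖m‖ ^ 2) := fun m => by
    rw [neg_apply, inner_neg_left]
    ring
  simpa only [hneg, WithLp.neg_fst, WithLp.neg_snd] using key

end ViscosityJets

section Coefficients

theorem iSup_iInf_le_add {U V : Type*} [Nonempty U] [Nonempty V] {F G : U → V → ℝ} {B c : ℝ}
    (hF : ∀ u v, |F u v| ≤ B) (hG : ∀ u v, |G u v| ≤ B) (h : ∀ u v, F u v ≤ G u v + c) :
    ⨆ u, ⨅ v, F u v ≤ (⨆ u, ⨅ v, G u v) + c := by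
  have hFb : ∀ u, BddBelow (range (F u)) := fun u => ⟨-B, by
    rintro _ ⟨v, rfl⟩
    exact (abs_le.1 (hF u v)).1⟩
  have hGb : ∀ u, BddBelow (range (G u)) := fun u => ⟨-B, by
    rintro _ ⟨v, rfl⟩
    exact (abs_le.1 (hG u v)).1⟩
  obtain ⟨v₀⟩ := ‹Nonempty V›
  have hGa : BddAbove (range fun u => ⨅ v, G u v) := ⟨B, by
    rintro _ ⟨u, rfl⟩
    exact (ciInf_le (hGb u) v₀).trans (abs_le.1 (hG u v₀)).2⟩
  have : Nonempty V := ⟨v₀⟩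
  refine ciSup_le fun u => ?_
  have h1 : (⨅ v, F u v) - c ≤ ⨅ v, G u v := le_ciInf fun v => by
    linarith [ciInf_le (hFb u) v, h u v]
  linarith [le_ciSup hGa u]

section Modulus

variable {U V X F : Type*} [PseudoMetricSpace U] [PseudoMetricSpace V]
  [PseudoMetricSpace X] [SeminormedAddCommGroup F] {T C : ℝ} {g : ℝ → X → U → V → F}

theorem continuousOn_uncurry_of_lipschitz
    (hc : ∀ x, ContinuousOn (fun q : ℝ × U × V => g q.1 x q.2.1 q.2.2)
      (Icc 0 T ×ˢ (univ : Set (U × V))))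
    (hl : ∀ t ∈ Icc 0 T, ∀ x x' u v, ‖g t x u v - g t x' u v‖ ≤ C * dist x x') :
    ContinuousOn (fun q : (ℝ × U × V) × X => g q.1.1 q.2 q.1.2.1 q.1.2.2)
      ((Icc 0 T ×ˢ (univ : Set (U × V))) ×ˢ (univ : Set X)) := by
  refine continuousOn_prod_of_continuousOn_lipschitzOnWith'
    (fun q : (ℝ × U × V) × X => g q.1.1 q.2 q.1.2.1 q.1.2.2) C.toNNReal ?_ fun x _ => hc x
  rintro ⟨t, u, v⟩ ⟨ht, -⟩
  refine LipschitzOnWith.of_dist_le_mul fun x _ x' _ => ?_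
  rw [dist_eq_norm]
  exact (hl t ht x x' u v).trans (by gcongr; exact Real.le_coe_toNNReal C)

variable [CompactSpace U] [CompactSpace V]

theorem exists_norm_le_of_lipschitz
    (hc : ∀ x, ContinuousOn (fun q : ℝ × U × V => g q.1 x q.2.1 q.2.2)
      (Icc 0 T ×ˢ (univ : Set (U × V))))
    (hl : ∀ t ∈ Icc 0 T, ∀ x x' u v, ‖g t x u v - g t x' u v‖ ≤ C * dist x x')
    {K : Set X} (hK : IsCompact K) :
    ∃ M, ∀ t ∈ Icc 0 T, ∀ x ∈ K, ∀ u v, ‖g t x u v‖ ≤ M := by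
  have hcomp : IsCompact ((Icc 0 T ×ˢ (univ : Set (U × V))) ×ˢ K) :=
    (isCompact_Icc.prod isCompact_univ).prod hK
  obtain ⟨M, hM⟩ := hcomp.exists_bound_of_continuousOn
    ((continuousOn_uncurry_of_lipschitz hc hl).mono (prod_mono_right (subset_univ K)))
  exact ⟨M, fun t ht x hx u v => hM ((t, u, v), x) ⟨⟨ht, mem_univ _⟩, hx⟩⟩

theorem exists_time_modulus_of_lipschitz
    (hc : ∀ x, ContinuousOn (fun q : ℝ × U × V => g q.1 x q.2.1 q.2.2)
      (Icc 0 T ×ˢ (univ : Set (U × V))))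
    (hl : ∀ t ∈ Icc 0 T, ∀ x x' u v, ‖g t x u v - g t x' u v‖ ≤ C * dist x x')
    {K : Set X} (hK : IsCompact K) {D : ℝ} (hD : 0 < D) :
    ∃ ρ > 0, ∀ t ∈ Icc 0 T, ∀ s ∈ Icc 0 T, |t - s| < ρ → ∀ x ∈ K, ∀ u v,
      ‖g t x u v - g s x u v‖ ≤ D := by
  have hcomp : IsCompact ((Icc 0 T ×ˢ (univ : Set (U × V))) ×ˢ K) :=
    (isCompact_Icc.prod isCompact_univ).prod hK
  have huc := hcomp.uniformContinuousOn_of_continuous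
    ((continuousOn_uncurry_of_lipschitz hc hl).mono (prod_mono_right (subset_univ K)))
  obtain ⟨ρ, hρ, h⟩ := Metric.uniformContinuousOn_iff.1 huc D hD
  refine ⟨ρ, hρ, fun t ht s hs hts x hx u v => ?_⟩
  have := h ((t, u, v), x) ⟨⟨ht, mem_univ _⟩, hx⟩ ((s, u, v), x) ⟨⟨hs, mem_univ _⟩, hx⟩
    (by simpa [Prod.dist_eq, Real.dist_eq] using hts)
  rw [dist_eq_norm] at this
  exact this.le

end Modulus

variable {n d : ℕ} {U V : Type*} [MetricSpace U] [MetricSpace V]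

/-- The standing regularity assumptions on the coefficients, with a common Lipschitz constant. -/
structure RegularCoefficients (T C : ℝ) (b : ℝ → Eucl n → U → V → Eucl n)
    (σ : ℝ → Eucl n → U → V → Matrix (Fin n) (Fin d) ℝ)
    (f : ℝ → Eucl n → ℝ → Eucl d → U → V → ℝ) : Prop where
  pos : 0 < C
  b_cont : ∀ x : Eucl n, ContinuousOn (fun q : ℝ × U × V => b q.1 x q.2.1 q.2.2)
    (Icc (0 : ℝ) T ×ˢ (univ : Set (U × V)))
  σ_cont : ∀ x : Eucl n, ContinuousOn (fun q : ℝ × U × V => σ q.1 x q.2.1 q.2.2)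
    (Icc (0 : ℝ) T ×ˢ (univ : Set (U × V)))
  f_cont : ∀ (x : Eucl n) (y : ℝ) (z : Eucl d),
    ContinuousOn (fun q : ℝ × U × V => f q.1 x y z q.2.1 q.2.2)
      (Icc (0 : ℝ) T ×ˢ (univ : Set (U × V)))
  b_lip : ∀ t ∈ Icc (0 : ℝ) T, ∀ (x x' : Eucl n) (u : U) (v : V),
    ‖b t x u v - b t x' u v‖ ≤ C * dist x x'
  σ_lip : ∀ t ∈ Icc (0 : ℝ) T, ∀ (x x' : Eucl n) (u : U) (v : V),
    ‖σ t x u v - σ t x' u v‖ ≤ C * dist x x'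
  f_lip : ∀ t ∈ Icc (0 : ℝ) T, ∀ (x x' : Eucl n) (y y' : ℝ) (z z' : Eucl d) (u : U) (v : V),
    |f t x y z u v - f t x' y' z' u v| ≤ C * (‖x - x'‖ + |y - y'| + ‖z - z'‖)

variable {T C : ℝ} {b : ℝ → Eucl n → U → V → Eucl n}
  {σ : ℝ → Eucl n → U → V → Matrix (Fin n) (Fin d) ℝ}
  {f : ℝ → Eucl n → ℝ → Eucl d → U → V → ℝ}

namespace RegularCoefficients

theorem continuous_slice {F : Type*} [TopologicalSpace F] {h : ℝ → U → V → F}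
    (hc : ContinuousOn (fun q : ℝ × U × V => h q.1 q.2.1 q.2.2)
      (Icc (0 : ℝ) T ×ˢ (univ : Set (U × V)))) {t : ℝ} (ht : t ∈ Icc 0 T) :
    Continuous fun q : U × V => h t q.1 q.2 :=
  hc.comp_continuous (f := fun q : U × V => (t, q.1, q.2)) (by fun_prop)
    fun q => ⟨ht, mem_univ _⟩

theorem continuous_integrand (hr : RegularCoefficients T C b σ f) {t : ℝ} (ht : t ∈ Icc 0 T)
    (x p : Eucl n) {Q : Eucl n → ℝ} (hQ : Continuous Q) :
    Continuous fun q : U × V => 1 / 2 * ∑ k, Q (euclColumn (σ t x q.1 q.2) k)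
      + ⟪p, b t x q.1 q.2⟫ + f t x 0 (rowMul p (σ t x q.1 q.2)) q.1 q.2 := by
  have hb : Continuous fun q : U × V => b t x q.1 q.2 :=
    continuous_slice (h := fun t u v => b t x u v) (hr.b_cont x) ht
  have hσ : Continuous fun q : U × V => σ t x q.1 q.2 :=
    continuous_slice (h := fun t u v => σ t x u v) (hr.σ_cont x) ht
  have hf : Continuous fun q : (U × V) × Eucl d => f t x 0 q.2 q.1.1 q.1.2 :=
    continuous_prod_of_continuous_lipschitzWith' _ C.toNNReal
      (fun q => LipschitzWith.of_dist_le_mul fun z z' => by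
        rw [Real.dist_eq, dist_eq_norm]
        refine (hr.f_lip t ht x x 0 0 z z' q.1 q.2).trans ?_
        simp only [sub_self, norm_zero, abs_zero, zero_add]
        gcongr
        exact Real.le_coe_toNNReal C)
      fun z => continuous_slice (h := fun t u v => f t x 0 z u v) (hr.f_cont x 0 z) ht
  refine ((continuous_const.mul (continuous_finsetSum _ fun k _ =>
    hQ.comp ((continuous_euclColumn k).comp hσ))).add (continuous_const.inner hb)).add ?_
  exact hf.comp (continuous_id.prodMk ((continuous_rowMul p).comp hσ))

variable [CompactSpace U] [CompactSpace V]

theorem exists_abs_integrand_le (hr : RegularCoefficients T C b σ f) {t : ℝ} (ht : t ∈ Icc 0 T)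
    (x p : Eucl n) {Q : Eucl n → ℝ} (hQ : Continuous Q) :
    ∃ B, ∀ u v, |1 / 2 * ∑ k, Q (euclColumn (σ t x u v) k)
      + ⟪p, b t x u v⟫ + f t x 0 (rowMul p (σ t x u v)) u v| ≤ B := by
  obtain ⟨B, hB⟩ := isCompact_univ.exists_bound_of_continuousOn
    (hr.continuous_integrand ht x p hQ).continuousOn
  exact ⟨B, fun u v => hB (u, v) (mem_univ _)⟩

theorem exists_bound (hr : RegularCoefficients T C b σ f) (R : ℝ) :
    ∃ M > 0, ∀ t ∈ Icc 0 T, ∀ x, ‖x‖ ≤ R → ∀ u v, ‖b t x u v‖ ≤ M ∧ ‖σ t x u v‖ ≤ M := by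
  obtain ⟨M₁, h₁⟩ := exists_norm_le_of_lipschitz hr.b_cont hr.b_lip
    (isCompact_closedBall (0 : Eucl n) R)
  obtain ⟨M₂, h₂⟩ := exists_norm_le_of_lipschitz hr.σ_cont hr.σ_lip
    (isCompact_closedBall (0 : Eucl n) R)
  refine ⟨max 1 (max M₁ M₂), by positivity, fun t ht x hx u v => ⟨?_, ?_⟩⟩
  · exact (h₁ t ht x (by simpa using hx) u v).trans ((le_max_left _ _).trans (le_max_right _ _))
  · exact (h₂ t ht x (by simpa using hx) u v).trans ((le_max_right _ _).trans (le_max_right _ _))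

theorem exists_time_modulus (hr : RegularCoefficients T C b σ f) (R Z : ℝ) {D : ℝ} (hD : 0 < D) :
    ∃ ρ > 0, ∀ t ∈ Icc 0 T, ∀ s ∈ Icc 0 T, |t - s| < ρ → ∀ x, ‖x‖ ≤ R → ∀ u v,
      ‖b t x u v - b s x u v‖ ≤ D ∧ ‖σ t x u v - σ s x u v‖ ≤ D ∧
      ∀ z, ‖z‖ ≤ Z → |f t x 0 z u v - f s x 0 z u v| ≤ D := by
  obtain ⟨ρ₁, hρ₁, h₁⟩ := exists_time_modulus_of_lipschitz hr.b_cont hr.b_lip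
    (isCompact_closedBall (0 : Eucl n) R) hD
  obtain ⟨ρ₂, hρ₂, h₂⟩ := exists_time_modulus_of_lipschitz hr.σ_cont hr.σ_lip
    (isCompact_closedBall (0 : Eucl n) R) hD
  obtain ⟨ρ₃, hρ₃, h₃⟩ := exists_time_modulus_of_lipschitz
    (g := fun t (xz : Eucl n × Eucl d) u v => f t xz.1 0 xz.2 u v) (C := 2 * C)
    (fun xz => hr.f_cont xz.1 0 xz.2) (fun t ht xz xz' u v => by
      refine (hr.f_lip t ht _ _ _ _ _ _ u v).trans ?_
      have h1 : ‖xz.1 - xz'.1‖ ≤ dist xz xz' := by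
        rw [← dist_eq_norm, Prod.dist_eq]; exact le_max_left _ _
      have h2 : ‖xz.2 - xz'.2‖ ≤ dist xz xz' := by
        rw [← dist_eq_norm, Prod.dist_eq]; exact le_max_right _ _
      have := hr.pos
      rw [sub_self, abs_zero]
      nlinarith)
    ((isCompact_closedBall (0 : Eucl n) R).prod (isCompact_closedBall (0 : Eucl d) Z)) hD
  refine ⟨min ρ₁ (min ρ₂ ρ₃), by positivity, fun t ht s hs hts x hx u v => ?_⟩
  obtain ⟨l1, l2⟩ := lt_min_iff.1 hts
  obtain ⟨l2, l3⟩ := lt_min_iff.1 l2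
  have hx' : x ∈ closedBall (0 : Eucl n) R := by simpa using hx
  exact ⟨h₁ t ht s hs l1 x hx' u v, h₂ t ht s hs l2 x hx' u v, fun z hz =>
    h₃ t ht s hs l3 (x, z) ⟨hx', by simpa using hz⟩ u v⟩

end RegularCoefficients

end Coefficients

section LocalComparison

variable {n d : ℕ}

/-- The penalisation operator of the doubling of variables, with weights `δ⁻¹` in time and `ε⁻¹` in
space. -/
def penaltyOp (n : ℕ) (δ ε : ℝ) : SpaceTime n →L[ℝ] SpaceTime n :=
  ((WithLp.prodContinuousLinearEquiv 2 ℝ ℝ (Eucl n)).symm : ℝ × Eucl n →L[ℝ] SpaceTime n) ∘L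
    ((δ⁻¹ • ContinuousLinearMap.fst ℝ ℝ (Eucl n)).prod
      (ε⁻¹ • ContinuousLinearMap.snd ℝ ℝ (Eucl n))) ∘L
    ((WithLp.prodContinuousLinearEquiv 2 ℝ ℝ (Eucl n)) : SpaceTime n →L[ℝ] ℝ × Eucl n)

theorem penaltyOp_fst (δ ε : ℝ) (z : SpaceTime n) : (penaltyOp n δ ε z).fst = δ⁻¹ * z.fst := rfl

theorem penaltyOp_snd (δ ε : ℝ) (z : SpaceTime n) : (penaltyOp n δ ε z).snd = ε⁻¹ • z.snd := rfl

theorem inner_penaltyOp (δ ε : ℝ) (z z' : SpaceTime n) :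
    ⟪penaltyOp n δ ε z, z'⟫ = δ⁻¹ * (z.fst * z'.fst) + ε⁻¹ * ⟪z.snd, z'.snd⟫ := by
  rw [WithLp.prod_inner_apply]
  change ⟪(penaltyOp n δ ε z).fst, z'.fst⟫ + ⟪(penaltyOp n δ ε z).snd, z'.snd⟫ = _
  rw [penaltyOp_fst, penaltyOp_snd, real_inner_smul_left, RCLike.inner_apply]
  simp only [conj_trivial]
  ring

theorem inner_penaltyOp_self (δ ε : ℝ) (z : SpaceTime n) :
    ⟪penaltyOp n δ ε z, z⟫ = δ⁻¹ * z.fst ^ 2 + ε⁻¹ * ‖z.snd‖ ^ 2 := by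
  rw [inner_penaltyOp, real_inner_self_eq_norm_sq]
  ring

theorem abs_fst_le_norm (z : SpaceTime n) : |z.fst| ≤ ‖z‖ := by
  refine abs_le_of_sq_le_sq' ?_ (norm_nonneg z) |>.2
  rw [WithLp.prod_norm_sq_eq_of_L2, Real.norm_eq_abs]
  nlinarith [sq_nonneg ‖z.snd‖]

theorem norm_snd_le_norm (z : SpaceTime n) : ‖z.snd‖ ≤ ‖z‖ := by
  refine abs_le_of_sq_le_sq' ?_ (norm_nonneg z) |>.2
  rw [WithLp.prod_norm_sq_eq_of_L2]
  nlinarith [sq_nonneg ‖z.fst‖]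

/-- The closed space-time cylinder `[a, t₁] × B(0, R)`. -/
def spaceTimeCylinder (n : ℕ) (a t₁ R : ℝ) : Set (SpaceTime n) :=
  {z | z.fst ∈ Icc a t₁ ∧ ‖z.snd‖ ≤ R}

theorem isCompact_spaceTimeCylinder (n : ℕ) (a t₁ R : ℝ) : IsCompact (spaceTimeCylinder n a t₁ R) := by
  have h : spaceTimeCylinder n a t₁ R = WithLp.toLp 2 '' (Icc a t₁ ×ˢ closedBall (0 : Eucl n) R) := by
    ext z
    constructor
    · rintro ⟨h1, h2⟩
      exact ⟨(z.fst, z.snd), ⟨h1, by simpa using h2⟩, rfl⟩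
    · rintro ⟨q, ⟨h1, h2⟩, rfl⟩
      exact ⟨h1, by simpa using h2⟩
  rw [h]
  exact (isCompact_Icc.prod (isCompact_closedBall _ _)).image
    (WithLp.prod_continuous_toLp 2 ℝ (Eucl n))

theorem continuous_spaceTime_fst : Continuous fun z : SpaceTime n => z.fst :=
  (WithLp.prod_continuous_ofLp 2 ℝ (Eucl n)).fst

theorem continuous_spaceTime_snd : Continuous fun z : SpaceTime n => z.snd :=
  (WithLp.prod_continuous_ofLp 2 ℝ (Eucl n)).snd

theorem spaceTimeCylinder_mem_nhds {a t₁ R : ℝ} {z : SpaceTime n} (h1 : z.fst ∈ Ioo a t₁)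
    (h2 : ‖z.snd‖ < R) : spaceTimeCylinder n a t₁ R ∈ 𝓝 z := by
  filter_upwards [continuous_spaceTime_fst.continuousAt.eventually (Ioo_mem_nhds h1.1 h1.2),
    continuous_spaceTime_snd.norm.continuousAt.eventually (gt_mem_nhds h2)] with y hy hy'
  exact ⟨⟨hy.1.le, hy.2.le⟩, le_of_lt hy'⟩

variable {U V : Type*} [MetricSpace U] [MetricSpace V] {T C : ℝ}
  {b : ℝ → Eucl n → U → V → Eucl n} {σ : ℝ → Eucl n → U → V → Matrix (Fin n) (Fin d) ℝ}
  {f : ℝ → Eucl n → ℝ → Eucl d → U → V → ℝ}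

theorem RegularCoefficients.integrand_sub_le (hr : RegularCoefficients T C b σ f) {t s : ℝ}
    (ht : t ∈ Icc 0 T) (hs : s ∈ Icc 0 T) {x x' q g p p' : Eucl n} {u : U} {v : V}
    {X Y A : SpaceTime n →L[ℝ] SpaceTime n} {ε κ η D M Δ c₀ : ℝ} {H : Eucl n → ℝ}
    (hε : 0 < ε) (hκ : 0 < κ) (hη : 0 ≤ η)
    (hXY : ∀ h h', ⟪X h, h⟫ + ⟪Y h', h'⟫ ≤ ⟪A (h - h'), h - h'⟫)
    (hA : ∀ m, ⟪A (spaceDir m), spaceDir m⟫ = ε⁻¹ * ‖m‖ ^ 2)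
    (hp : ‖p - q‖ ≤ η) (hp' : ‖p' + q‖ ≤ η)
    (hM : ‖b t x u v‖ ≤ M ∧ ‖σ t x u v‖ ≤ M) (hM' : ‖b s x' u v‖ ≤ M ∧ ‖σ s x' u v‖ ≤ M)
    (hbΔ : ‖b t x u v - b s x' u v‖ ≤ Δ) (hσΔ : ‖σ t x u v - σ s x' u v‖ ≤ Δ)
    (hfD : |f t x' 0 (rowMul q (σ s x' u v)) u v - f s x' 0 (rowMul q (σ s x' u v)) u v| ≤ D)
    (hc₀ : 1 / 2 * ∑ k, H (euclColumn (σ t x u v) k) + ⟪g, b t x u v⟫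
      + C * ‖rowMul g (σ t x u v)‖ ≤ c₀) :
    1 / 2 * ∑ k, (H (euclColumn (σ t x u v) k)
        + (⟪X (spaceDir (euclColumn (σ t x u v) k)), spaceDir (euclColumn (σ t x u v) k)⟫
          + 2 * κ * ‖euclColumn (σ t x u v) k‖ ^ 2))
      + ⟪g + p, b t x u v⟫ + f t x 0 (rowMul (g + p) (σ t x u v)) u v
    ≤ (1 / 2 * ∑ k, -(⟪Y (spaceDir (euclColumn (σ s x' u v) k)),
          spaceDir (euclColumn (σ s x' u v) k)⟫ + 2 * κ * ‖euclColumn (σ s x' u v) k‖ ^ 2)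
      + ⟪-p', b s x' u v⟫ + f s x' 0 (rowMul (-p') (σ s x' u v)) u v)
      + (c₀ + (1 / 2 * (ε⁻¹ * Δ ^ 2) + 2 * κ * M ^ 2 + (1 + C) * (‖q‖ * Δ + 2 * η * M)
        + C * ‖x - x'‖ + D)) := by
  have hC := hr.pos
  set S := σ t x u v with hS
  set S' := σ s x' u v with hS'
  set B := b t x u v with hB
  set B' := b s x' u v with hB'
  have hM0 : 0 ≤ M := (norm_nonneg _).trans hM.1
  have hquad : ∑ k, (⟪X (spaceDir (euclColumn S k)), spaceDir (euclColumn S k)⟫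
        + ⟪Y (spaceDir (euclColumn S' k)), spaceDir (euclColumn S' k)⟫) ≤ ε⁻¹ * Δ ^ 2 := by
    calc _ ≤ ∑ k, ε⁻¹ * ‖euclColumn (S - S') k‖ ^ 2 := by
          refine Finset.sum_le_sum fun k _ => (hXY _ _).trans ?_
          rw [← spaceDir_sub, hA, euclColumn_sub]
      _ = ε⁻¹ * ‖S - S'‖ ^ 2 := by rw [← Finset.mul_sum, sum_norm_euclColumn_sq]
      _ ≤ _ := by gcongr
  rw [Finset.sum_add_distrib] at hquad
  have hS2 : ‖S‖ ^ 2 ≤ M ^ 2 := by gcongr; exact hM.2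
  have hS2' : ‖S'‖ ^ 2 ≤ M ^ 2 := by gcongr; exact hM'.2
  have hκS : κ * ‖S‖ ^ 2 ≤ κ * M ^ 2 := by gcongr
  have hκS' : κ * ‖S'‖ ^ 2 ≤ κ * M ^ 2 := by gcongr
  have hdrift : ⟪p, B⟫ + ⟪p', B'⟫ ≤ ‖q‖ * Δ + 2 * η * M := by
    have h1 : ⟪p, B⟫ + ⟪p', B'⟫ = ⟪q, B - B'⟫ + ⟪p - q, B⟫ + ⟪p' + q, B'⟫ := by
      rw [inner_sub_right, inner_sub_left, inner_add_left]; ring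
    have h2 : ⟪q, B - B'⟫ ≤ ‖q‖ * Δ := (real_inner_le_norm _ _).trans (by gcongr)
    have h3 : ⟪p - q, B⟫ ≤ η * M :=
      (real_inner_le_norm _ _).trans (mul_le_mul hp hM.1 (norm_nonneg _) hη)
    have h4 : ⟪p' + q, B'⟫ ≤ η * M :=
      (real_inner_le_norm _ _).trans (mul_le_mul hp' hM'.1 (norm_nonneg _) hη)
    linarith
  have hz1 : ‖rowMul (g + p) S - rowMul q S'‖ ≤ ‖rowMul g S‖ + η * M + ‖q‖ * Δ := by
    have h1 : rowMul (g + p) S - rowMul q S'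
        = rowMul g S + rowMul (p - q) S + rowMul q (S - S') := by
      rw [rowMul_add_left, rowMul_sub_left, rowMul_sub_right]; abel
    rw [h1]
    refine (norm_add₃_le).trans ?_
    gcongr
    · exact (norm_rowMul_le _ _).trans (mul_le_mul hp hM.2 (norm_nonneg _) hη)
    · exact (norm_rowMul_le _ _).trans (by gcongr)
  have hz2 : ‖rowMul q S' - rowMul (-p') S'‖ ≤ η * M := by
    rw [← rowMul_sub_left, sub_neg_eq_add, add_comm q p']
    exact (norm_rowMul_le _ _).trans (mul_le_mul hp' hM'.2 (norm_nonneg _) hη)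
  have hf1 := (abs_le.1 (hr.f_lip t ht x x' 0 0 (rowMul (g + p) S) (rowMul q S') u v)).2
  have hf2 := (abs_le.1 (hr.f_lip s hs x' x' 0 0 (rowMul q S') (rowMul (-p') S') u v)).2
  simp only [sub_self, abs_zero, norm_zero, add_zero, zero_add] at hf1 hf2
  have hf3 := (abs_le.1 hfD).2
  have hf4 : C * (‖x - x'‖ + ‖rowMul (g + p) S - rowMul q S'‖)
      ≤ C * (‖x - x'‖ + (‖rowMul g S‖ + η * M + ‖q‖ * Δ)) := by gcongr
  have hf5 : C * ‖rowMul q S' - rowMul (-p') S'‖ ≤ C * (η * M) := by gcongr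
  simp only [Finset.sum_add_distrib, Finset.sum_neg_distrib, ← Finset.mul_sum,
    sum_norm_euclColumn_sq, inner_add_left, inner_neg_left]
  linarith

variable [CompactSpace U] [CompactSpace V] [Nonempty U] [Nonempty V]

theorem continuous_secondDirDeriv {θ : ℝ → Eucl n → ℝ}
    (hθ : ContDiff ℝ 3 fun q : ℝ × Eucl n => θ q.1 q.2) (t : ℝ) (x : Eucl n) :
    Continuous fun m => secondDirDeriv θ t x m := by
  simp only [secondDirDeriv_eq hθ]
  exact (ContinuousLinearMap.continuous _).clm_apply continuous_id

/-- At a doubled maximum the viscosity inequalities contradict strictness of the barrier, up to the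
errors produced by the doubling. -/
theorem RegularCoefficients.barrier_le_error (hr : RegularCoefficients T C b σ f)
    {w v θ : ℝ → Eucl n → ℝ} {g g' : Eucl n → ℝ}
    (hw : IsViscositySubsolution T (lowerHamiltonian b σ f) g w)
    (hv : IsViscositySupersolution T (lowerHamiltonian b σ f) g' v)
    (hθ : ContDiff ℝ 3 fun q : ℝ × Eucl n => θ q.1 q.2) {S : Set (SpaceTime n)} {t s : ℝ}
    (ht : t ∈ Ico 0 T) (hs : s ∈ Ico 0 T) {x x' q : Eucl n} {p p' : SpaceTime n}
    {X Y A : SpaceTime n →L[ℝ] SpaceTime n} {ε κ η D M Δ α : ℝ}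
    (hε : 0 < ε) (hκ : 0 < κ) (hη : 0 ≤ η)
    (hj : HasSuperjetOn (fun z : SpaceTime n => w z.fst z.snd - θ z.fst z.snd) S
      (WithLp.toLp 2 (t, x)) p X)
    (hj' : HasSuperjetOn (fun z : SpaceTime n => -v z.fst z.snd) S (WithLp.toLp 2 (s, x')) p' Y)
    (hS : S ∈ 𝓝 (WithLp.toLp 2 (t, x))) (hS' : S ∈ 𝓝 (WithLp.toLp 2 (s, x')))
    (hXY : ∀ h h', ⟪X h, h⟫ + ⟪Y h', h'⟫ ≤ ⟪A (h - h'), h - h'⟫)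
    (hA : ∀ m, ⟪A (spaceDir m), spaceDir m⟫ = ε⁻¹ * ‖m‖ ^ 2)
    (hp : ‖p.snd - q‖ ≤ η) (hp' : ‖p'.snd + q‖ ≤ η) (hpt : p.fst + p'.fst ≤ 2 * η)
    (hM : ∀ u v, ‖b t x u v‖ ≤ M ∧ ‖σ t x u v‖ ≤ M)
    (hM' : ∀ u v, ‖b s x' u v‖ ≤ M ∧ ‖σ s x' u v‖ ≤ M)
    (hbΔ : ∀ u v, ‖b t x u v - b s x' u v‖ ≤ Δ) (hσΔ : ∀ u v, ‖σ t x u v - σ s x' u v‖ ≤ Δ)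
    (hfD : ∀ u v,
      |f t x' 0 (rowMul q (σ s x' u v)) u v - f s x' 0 (rowMul q (σ s x' u v)) u v| ≤ D)
    (hstrict : ∀ u v, timeDeriv θ t x
      + (1 / 2 * ∑ k, secondDirDeriv θ t x (euclColumn (σ t x u v) k)
        + ⟪spaceGrad θ t x, b t x u v⟫ + C * ‖rowMul (spaceGrad θ t x) (σ t x u v)‖) ≤ -α) :
    α ≤ 2 * η + (1 / 2 * (ε⁻¹ * Δ ^ 2) + 2 * κ * M ^ 2 + (1 + C) * (‖q‖ * Δ + 2 * η * M)
        + C * ‖x - x'‖ + D) := by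
  have ht' : t ∈ Icc 0 T := ⟨ht.1, ht.2.le⟩
  have hs' : s ∈ Icc 0 T := ⟨hs.1, hs.2.le⟩
  have h1 := hw.of_superjet hθ ht hj hS hκ
  have h2 := hv.of_superjet hs hj' hS' hκ
  have hcX : ∀ Z : SpaceTime n →L[ℝ] SpaceTime n, Continuous fun m : Eucl n =>
      ⟪Z (spaceDir m), spaceDir m⟫ + 2 * κ * ‖m‖ ^ 2 := fun Z => by
    have hsd : Continuous fun m : Eucl n => spaceDir m :=
      (WithLp.prod_continuous_toLp 2 ℝ (Eucl n)).comp (Continuous.prodMk_right (0 : ℝ))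
    exact ((Z.continuous.comp hsd).inner hsd).add (by fun_prop)
  obtain ⟨B₁, hB₁⟩ := hr.exists_abs_integrand_le ht' x (spaceGrad θ t x + p.snd)
    ((continuous_secondDirDeriv hθ t x).add (hcX X))
  obtain ⟨B₂, hB₂⟩ := hr.exists_abs_integrand_le hs' x' (-p'.snd) (hcX Y).neg
  have h3 := iSup_iInf_le_add (fun u v => (hB₁ u v).trans (le_max_left B₁ B₂))
    (fun u v => (hB₂ u v).trans (le_max_right B₁ B₂)) fun u v =>
      hr.integrand_sub_le ht' hs' (H := fun m => secondDirDeriv θ t x m) hε hκ hη hXY hA hp hp'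
        (hM u v) (hM' u v) (hbΔ u v) (hσΔ u v) (hfD u v)
        (c₀ := -α - timeDeriv θ t x) (by linarith [hstrict u v])
  simp only [Pi.add_apply, Pi.neg_apply] at h3
  linarith

end LocalComparison

section StrictBarrier

variable {n d : ℕ}

/-- Doubling of variables on a cylinder: if `u + v` is nonpositive on the boundary and positive
somewhere, then the doubled maxima are interior and their separation is controlled. -/
theorem exists_interior_superjets {a t₁ R : ℝ} {u v : SpaceTime n → ℝ}
    (hu : ContinuousOn u (spaceTimeCylinder n a t₁ R)) (hv : ContinuousOn v (spaceTimeCylinder n a t₁ R))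
    (hbd : ∀ z ∈ spaceTimeCylinder n a t₁ R, z.fst = a ∨ z.fst = t₁ ∨ ‖z.snd‖ = R → u z + v z ≤ 0)
    {z₀ : SpaceTime n} (hz₀ : z₀ ∈ spaceTimeCylinder n a t₁ R) (hpos : 0 < u z₀ + v z₀) :
    ∃ C₀ > 0, ∀ e > 0, ∃ ε₀ > 0, ∀ ε δ η : ℝ, 0 < ε → ε ≤ ε₀ → 0 < δ → δ ≤ ε → 0 < η → η ≤ ε₀ →
      ∃ y y' p p' : SpaceTime n, ∃ X Y : SpaceTime n →L[ℝ] SpaceTime n,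
        (y.fst ∈ Ioo a t₁ ∧ ‖y.snd‖ < R) ∧ (y'.fst ∈ Ioo a t₁ ∧ ‖y'.snd‖ < R) ∧
        (y.fst - y'.fst) ^ 2 ≤ C₀ * δ ∧ ‖y.snd - y'.snd‖ ^ 2 ≤ C₀ * ε ∧
        ‖y.snd - y'.snd‖ ^ 2 ≤ 4 * e * ε ∧
        ‖p - penaltyOp n δ ε (y - y')‖ ≤ η ∧ ‖p' + penaltyOp n δ ε (y - y')‖ ≤ η ∧
        HasSuperjetOn u (spaceTimeCylinder n a t₁ R) y p X ∧ HasSuperjetOn v (spaceTimeCylinder n a t₁ R) y' p' Y ∧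
        ∀ h h', ⟪X h, h⟫ + ⟪Y h', h'⟫ ≤ ⟪penaltyOp n δ ε (h - h'), h - h'⟫ := by
  have hS := isCompact_spaceTimeCylinder n a t₁ R
  obtain ⟨B, hB⟩ := hS.exists_bound_of_continuousOn hu
  have hB0 : 0 ≤ B := (norm_nonneg _).trans (hB z₀ hz₀)
  refine ⟨2 * (2 * B + 1), by positivity, fun e he => ?_⟩
  set C₀ := 2 * (2 * B + 1) with hC₀
  have hC₀pos : 0 < C₀ := by positivity
  set c := u z₀ + v z₀ with hc
  set e' := min e (c / 4) with he'
  have he'pos : 0 < e' := lt_min he (by positivity)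
  have he'e : e' ≤ e := min_le_left _ _
  have he'c : e' ≤ c / 4 := min_le_right _ _
  obtain ⟨r₁, hr₁, h₁⟩ := Metric.uniformContinuousOn_iff.1
    (hS.uniformContinuousOn_of_continuous hu) e' he'pos
  obtain ⟨r₂, hr₂, h₂⟩ := Metric.uniformContinuousOn_iff.1
    (hS.uniformContinuousOn_of_continuous hv) e' he'pos
  set r₀ := min r₁ r₂ with hr₀
  have hr₀pos : 0 < r₀ := lt_min hr₁ hr₂
  refine ⟨min (r₀ ^ 2 / (4 * C₀)) (min e' 1), by positivity, fun ε δ η hε hε₀ hδ hδε hη hη₀ => ?_⟩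
  have hε1 : ε * (4 * C₀) ≤ r₀ ^ 2 :=
    (le_div_iff₀ (by positivity)).1 (hε₀.trans (min_le_left _ _))
  have hηe : η ≤ e' := hη₀.trans ((min_le_right _ _).trans (min_le_left _ _))
  have hη1 : η ≤ 1 := hη₀.trans ((min_le_right _ _).trans (min_le_right _ _))
  obtain ⟨y, hy, y', hy', p, p', X, Y, hmax, hp, hp', hX, hY, hXY⟩ :=
    exists_superjets_of_doubling hS ⟨z₀, hz₀⟩ hu hv (penaltyOp n δ ε)
      (fun z z' => by
        rw [inner_penaltyOp, ← real_inner_comm z, inner_penaltyOp, real_inner_comm z.snd]; ring)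
      (fun z => by rw [inner_penaltyOp_self]; positivity) hη
  have hdiag := hmax y' hy' y' hy'
  have hz := hmax z₀ hz₀ z₀ hz₀
  rw [sub_self, map_zero, inner_zero_left, inner_penaltyOp_self] at hdiag hz
  simp only [WithLp.sub_fst, WithLp.sub_snd] at hdiag hz
  have hty : 0 ≤ δ⁻¹ * (y.fst - y'.fst) ^ 2 := by positivity
  have hxy : 0 ≤ ε⁻¹ * ‖y.snd - y'.snd‖ ^ 2 := by positivity
  have hb1 := (abs_le.1 (hB y hy)).2
  have hb2 := (abs_le.1 (hB y' hy')).1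
  have hkt : (y.fst - y'.fst) ^ 2 ≤ C₀ * δ := by
    have : δ⁻¹ * (y.fst - y'.fst) ^ 2 ≤ C₀ := by linarith
    rwa [inv_mul_le_iff₀ hδ, mul_comm] at this
  have hkx : ‖y.snd - y'.snd‖ ^ 2 ≤ C₀ * ε := by
    have : ε⁻¹ * ‖y.snd - y'.snd‖ ^ 2 ≤ C₀ := by linarith
    rwa [inv_mul_le_iff₀ hε, mul_comm] at this
  have hdist : dist y y' < r₀ := by
    rw [dist_eq_norm]
    refine lt_of_pow_lt_pow_left₀ 2 hr₀pos.le ?_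
    rw [WithLp.prod_norm_sq_eq_of_L2, Real.norm_eq_abs, sq_abs]
    simp only [WithLp.sub_fst, WithLp.sub_snd]
    have : C₀ * δ ≤ C₀ * ε := by gcongr
    nlinarith
  have hu' := h₁ y hy y' hy' (hdist.trans_le (min_le_left _ _))
  have hv' := h₂ y hy y' hy' (hdist.trans_le (min_le_right _ _))
  rw [Real.dist_eq, abs_lt] at hu' hv'
  have hkx' : ‖y.snd - y'.snd‖ ^ 2 ≤ 4 * e * ε := by
    have : ε⁻¹ * ‖y.snd - y'.snd‖ ^ 2 ≤ 4 * e := by linarith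
    rwa [inv_mul_le_iff₀ hε, mul_comm] at this
  have hint : ∀ z ∈ spaceTimeCylinder n a t₁ R, 0 < u z + v z → z.fst ∈ Ioo a t₁ ∧ ‖z.snd‖ < R := by
    intro z hz hzpos
    have hn : ¬ (z.fst = a ∨ z.fst = t₁ ∨ ‖z.snd‖ = R) := fun h => hzpos.not_ge (hbd z hz h)
    push Not at hn
    exact ⟨⟨hz.1.1.lt_of_ne' hn.1, hz.1.2.lt_of_ne hn.2.1⟩, hz.2.lt_of_ne hn.2.2⟩
  exact ⟨y, y', p, p', X, Y, hint y hy (by linarith), hint y' hy' (by linarith), hkt, hkx, hkx',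
    hp, hp', hX, hY, hXY⟩

variable {U V : Type*} [MetricSpace U] [MetricSpace V] {T C : ℝ}
  {b : ℝ → Eucl n → U → V → Eucl n} {σ : ℝ → Eucl n → U → V → Matrix (Fin n) (Fin d) ℝ}
  {f : ℝ → Eucl n → ℝ → Eucl d → U → V → ℝ}
  [CompactSpace U] [CompactSpace V] [Nonempty U] [Nonempty V]

set_option maxHeartbeats 1000000 in
/-- A strict barrier that dominates `w - v` on the boundary of a cylinder dominates it inside. -/
theorem RegularCoefficients.sub_le_of_strict_barrier (hr : RegularCoefficients T C b σ f)
    {w v θ : ℝ → Eucl n → ℝ} {g g' : Eucl n → ℝ}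
    (hw : IsViscositySubsolution T (lowerHamiltonian b σ f) g w)
    (hv : IsViscositySupersolution T (lowerHamiltonian b σ f) g' v)
    (hwc : ContinuousOn (fun q : ℝ × Eucl n => w q.1 q.2) (Icc 0 T ×ˢ univ))
    (hvc : ContinuousOn (fun q : ℝ × Eucl n => v q.1 q.2) (Icc 0 T ×ˢ univ))
    (hθ : ContDiff ℝ 3 fun q : ℝ × Eucl n => θ q.1 q.2) {a t₁ R α : ℝ} (ha : 0 ≤ a) (ht₁ : t₁ ≤ T)
    (hα : 0 < α)
    (hstrict : ∀ t ∈ Ioo a t₁, ∀ x u v, timeDeriv θ t x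
      + (1 / 2 * ∑ k, secondDirDeriv θ t x (euclColumn (σ t x u v) k)
        + ⟪spaceGrad θ t x, b t x u v⟫ + C * ‖rowMul (spaceGrad θ t x) (σ t x u v)‖) ≤ -α)
    (hbd : ∀ t ∈ Icc a t₁, ∀ x, ‖x‖ ≤ R → t = a ∨ t = t₁ ∨ ‖x‖ = R → w t x - v t x ≤ θ t x)
    {t : ℝ} (ht : t ∈ Icc a t₁) {x : Eucl n} (hx : ‖x‖ ≤ R) : w t x - v t x ≤ θ t x := by
  by_contra! hcon
  have hR0 : 0 ≤ R := (norm_nonneg _).trans hx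
  have hC := hr.pos
  have hmaps : MapsTo (fun z : SpaceTime n => (z.fst, z.snd)) (spaceTimeCylinder n a t₁ R)
      (Icc 0 T ×ˢ (univ : Set (Eucl n))) := fun z hz =>
    ⟨⟨ha.trans hz.1.1, hz.1.2.trans ht₁⟩, mem_univ _⟩
  have hpair : Continuous fun z : SpaceTime n => (z.fst, z.snd) :=
    continuous_spaceTime_fst.prodMk continuous_spaceTime_snd
  have hcu : ContinuousOn (fun z : SpaceTime n => w z.fst z.snd - θ z.fst z.snd)
      (spaceTimeCylinder n a t₁ R) :=
    (hwc.comp hpair.continuousOn hmaps).sub (hθ.continuous.comp hpair).continuousOn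
  have hcv : ContinuousOn (fun z : SpaceTime n => -v z.fst z.snd) (spaceTimeCylinder n a t₁ R) :=
    (hvc.comp hpair.continuousOn hmaps).neg
  obtain ⟨C₀, hC₀, h⟩ := exists_interior_superjets hcu hcv
    (fun z hz hz' => by linarith [hbd z.fst hz.1 z.snd hz.2 hz'])
    (z₀ := WithLp.toLp 2 (t, x)) ⟨ht, hx⟩ (by change 0 < w t x - θ t x + -v t x; linarith)
  obtain ⟨ε₀, hε₀, h⟩ := h (α / (32 * (2 * C ^ 2 + C))) (by positivity)
  obtain ⟨M, hM, hbound⟩ := hr.exists_bound R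
  obtain ⟨ε, hε, hεε₀, hεC⟩ : ∃ ε > 0, ε ≤ ε₀ ∧ C₀ * ε ≤ (α / (8 * C)) ^ 2 := by
    refine ⟨min ε₀ ((α / (8 * C)) ^ 2 / C₀), by positivity, min_le_left _ _, ?_⟩
    calc _ ≤ C₀ * ((α / (8 * C)) ^ 2 / C₀) := by gcongr; exact min_le_right _ _
      _ = _ := by field_simp
  obtain ⟨D, hD, hD1, hDα⟩ : ∃ D > 0, D ≤ 1 ∧
      (ε⁻¹ + (1 + C) * (ε⁻¹ * (2 * R)) + 1) * D ≤ α / 8 := by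
    have hk : 0 < ε⁻¹ + (1 + C) * (ε⁻¹ * (2 * R)) + 1 := by positivity
    refine ⟨min 1 (α / 8 / (ε⁻¹ + (1 + C) * (ε⁻¹ * (2 * R)) + 1)), by positivity,
      min_le_left _ _, ?_⟩
    calc _ ≤ _ * (α / 8 / (ε⁻¹ + (1 + C) * (ε⁻¹ * (2 * R)) + 1)) := by
          gcongr; exact min_le_right _ _
      _ = _ := by field_simp
  obtain ⟨ρ, hρ, hmod⟩ := hr.exists_time_modulus R (ε⁻¹ * (2 * R) * M) hD
  obtain ⟨δ, hδ, hδε, hδρ⟩ : ∃ δ > 0, δ ≤ ε ∧ C₀ * δ < ρ ^ 2 := by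
    refine ⟨min ε (ρ ^ 2 / (2 * C₀)), by positivity, min_le_left _ _, ?_⟩
    calc _ ≤ C₀ * (ρ ^ 2 / (2 * C₀)) := by gcongr; exact min_le_right _ _
      _ = ρ ^ 2 / 2 := by field_simp
      _ < _ := half_lt_self (by positivity)
  obtain ⟨η, hη, hηε₀, hηα⟩ : ∃ η > 0, η ≤ ε₀ ∧ (2 + 2 * (1 + C) * M) * η ≤ α / 8 := by
    have hk : 0 < 2 + 2 * (1 + C) * M := by positivity
    refine ⟨min ε₀ (α / 8 / (2 + 2 * (1 + C) * M)), by positivity, min_le_left _ _, ?_⟩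
    calc _ ≤ _ * (α / 8 / (2 + 2 * (1 + C) * M)) := by gcongr; exact min_le_right _ _
      _ = _ := by field_simp
  obtain ⟨y, y', p, p', X, Y, hy, hy', hkt, hkx, hkx', hp, hp', hX, hY, hXY⟩ :=
    h ε δ η hε hεε₀ hδ hδε hη hηε₀
  have hIcc : ∀ {s}, s ∈ Ioo a t₁ → s ∈ Icc 0 T := fun hs =>
    ⟨ha.trans hs.1.le, hs.2.le.trans ht₁⟩
  have hIco : ∀ {s}, s ∈ Ioo a t₁ → s ∈ Ico 0 T := fun hs =>
    ⟨ha.trans hs.1.le, hs.2.trans_le ht₁⟩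
  set r := ‖y.snd - y'.snd‖ with hrdef
  have hr0 : 0 ≤ r := norm_nonneg _
  have hrR : r ≤ 2 * R := (norm_sub_le _ _).trans (by linarith [hy.2, hy'.2])
  have htime : |y.fst - y'.fst| < ρ := abs_lt_of_sq_lt_sq (hkt.trans_lt hδρ) hρ.le
  have hm := hmod y.fst (hIcc hy.1) y'.fst (hIcc hy'.1) htime y'.snd hy'.2.le
  set q := ε⁻¹ • (y.snd - y'.snd) with hq
  have hqn : ‖q‖ = ε⁻¹ * r := by rw [hq, norm_smul, Real.norm_of_nonneg (by positivity)]
  have hA : (penaltyOp n δ ε (y - y')).snd = q := rfl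
  have herr := hr.barrier_le_error hw hv hθ (hIco hy.1) (hIco hy'.1) (x := y.snd) (x' := y'.snd) (q := q) (D := D) (M := M)
    (Δ := C * r + D) (κ := α / (16 * M ^ 2)) hε (by positivity) hη.le hX hY
    (spaceTimeCylinder_mem_nhds hy.1 hy.2) (spaceTimeCylinder_mem_nhds hy'.1 hy'.2) hXY
    (fun m => by rw [inner_penaltyOp_self]; simp [spaceDir])
    ((norm_snd_le_norm (p - penaltyOp n δ ε (y - y'))).trans hp)
    ((norm_snd_le_norm (p' + penaltyOp n δ ε (y - y'))).trans hp')
    (by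
      have h1 := (abs_le.1 ((abs_fst_le_norm _).trans hp)).2
      have h2 := (abs_le.1 ((abs_fst_le_norm _).trans hp')).2
      simp only [WithLp.sub_fst, WithLp.add_fst] at h1 h2
      linarith)
    (fun u v => hbound _ (hIcc hy.1) _ hy.2.le u v)
    (fun u v => hbound _ (hIcc hy'.1) _ hy'.2.le u v)
    (fun u v => by
      refine (norm_sub_le_norm_sub_add_norm_sub _ (b y.fst y'.snd u v) _).trans ?_
      refine add_le_add ?_ (hm u v).1
      simpa only [dist_eq_norm] using hr.b_lip _ (hIcc hy.1) y.snd y'.snd u v)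
    (fun u v => by
      refine (norm_sub_le_norm_sub_add_norm_sub _ (σ y.fst y'.snd u v) _).trans ?_
      refine add_le_add ?_ (hm u v).2.1
      simpa only [dist_eq_norm] using hr.σ_lip _ (hIcc hy.1) y.snd y'.snd u v)
    (fun u v => (hm u v).2.2 _ ((norm_rowMul_le _ _).trans (by
      rw [hqn]
      gcongr
      exact (hbound _ (hIcc hy'.1) _ hy'.2.le u v).2)))
    (fun u v => hstrict _ hy.1 _ u v)
  rw [← hrdef, hqn] at herr
  have hkε : ε⁻¹ * r ^ 2 ≤ 4 * (α / (32 * (2 * C ^ 2 + C))) := by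
    rw [inv_mul_le_iff₀ hε]; linarith
  have hCr : C * r ≤ α / 8 := by
    have : r ≤ α / (8 * C) := (abs_le_of_sq_le_sq' (hkx.trans hεC) (by positivity)).2
    calc C * r ≤ C * (α / (8 * C)) := by gcongr
      _ = _ := by field_simp
  have hκM : 2 * (α / (16 * M ^ 2)) * M ^ 2 = α / 8 := by field_simp; norm_num
  have h1 : 1 / 2 * (ε⁻¹ * (C * r + D) ^ 2) ≤ C ^ 2 * (ε⁻¹ * r ^ 2) + ε⁻¹ * D := by
    have : 1 / 2 * (C * r + D) ^ 2 ≤ C ^ 2 * r ^ 2 + D := by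
      nlinarith [sq_nonneg (C * r - D)]
    calc _ = ε⁻¹ * (1 / 2 * (C * r + D) ^ 2) := by ring
      _ ≤ ε⁻¹ * (C ^ 2 * r ^ 2 + D) := by gcongr
      _ = _ := by ring
  have h2 : ε⁻¹ * r * D ≤ ε⁻¹ * (2 * R) * D := by gcongr
  have h3 : (1 + C) * (ε⁻¹ * r * D) ≤ (1 + C) * (ε⁻¹ * (2 * R) * D) := by gcongr
  have h4 : (2 * C ^ 2 + C) * (ε⁻¹ * r ^ 2) ≤ α / 8 := by
    calc _ ≤ (2 * C ^ 2 + C) * (4 * (α / (32 * (2 * C ^ 2 + C)))) := by gcongr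
      _ = _ := by field_simp; norm_num
  linarith

end StrictBarrier

section GrowthBarrier

variable {n d : ℕ}

/-- The logarithmic weight `1 + log (1 + ‖x‖²)^{1/2}`. -/
def logWeight (x : Eucl n) : ℝ := 1 + 1 / 2 * Real.log (1 + ‖x‖ ^ 2)

theorem one_le_logWeight (x : Eucl n) : 1 ≤ logWeight x := by
  have : 0 ≤ Real.log (1 + ‖x‖ ^ 2) := Real.log_nonneg (by nlinarith [sq_nonneg ‖x‖])
  rw [logWeight]
  linarith

theorem contDiff_logWeight {k : WithTop ℕ∞} : ContDiff ℝ k (logWeight : Eucl n → ℝ) :=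
  contDiff_const.add (contDiff_const.mul
    ((contDiff_const.add (contDiff_norm_sq ℝ)).log fun x => by positivity))

/-- The weight `exp (c (1 + log (1 + ‖x‖²)^{1/2})²)`. -/
def expLogWeight (c : ℝ) (x : Eucl n) : ℝ := Real.exp (c * logWeight x ^ 2)

theorem hasDerivAt_norm_sq_line (x e : Eucl n) (s : ℝ) :
    HasDerivAt (fun s : ℝ => ‖x + s • e‖ ^ 2) (2 * ⟪x + s • e, e⟫) s := by
  have h : HasDerivAt (fun s : ℝ => x + s • e) e s := by
    simpa using ((hasDerivAt_id s).smul_const e).const_add x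
  exact h.norm_sq

theorem hasDerivAt_logWeight_line (x e : Eucl n) (s : ℝ) :
    HasDerivAt (fun s : ℝ => logWeight (x + s • e))
      (⟪x + s • e, e⟫ / (1 + ‖x + s • e‖ ^ 2)) s := by
  have h := ((((hasDerivAt_norm_sq_line x e s).const_add 1).log (by positivity)).const_mul
    (1 / 2)).const_add 1
  exact h.congr_deriv (by ring)

theorem hasDerivAt_expLogWeight_line (c : ℝ) (x e : Eucl n) (s : ℝ) :
    HasDerivAt (fun s : ℝ => expLogWeight c (x + s • e))
      (expLogWeight c (x + s • e)
        * (2 * c * logWeight (x + s • e) * (⟪x + s • e, e⟫ / (1 + ‖x + s • e‖ ^ 2)))) s := by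
  have h := (((hasDerivAt_logWeight_line x e s).pow 2).const_mul c).exp
  refine h.congr_deriv ?_
  simp only [expLogWeight, Pi.pow_apply]
  push_cast
  ring

theorem hasDerivAt_deriv_expLogWeight_line (c : ℝ) (x e : Eucl n) :
    HasDerivAt (deriv fun s : ℝ => expLogWeight c (x + s • e))
      (expLogWeight c x * ((2 * c * logWeight x * (⟪x, e⟫ / (1 + ‖x‖ ^ 2))) ^ 2
        + 2 * c * (⟪x, e⟫ / (1 + ‖x‖ ^ 2)) ^ 2
        + 2 * c * logWeight x * (‖e‖ ^ 2 / (1 + ‖x‖ ^ 2)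
          - 2 * (⟪x, e⟫ / (1 + ‖x‖ ^ 2)) ^ 2))) 0 := by
  have hderiv : (deriv fun s : ℝ => expLogWeight c (x + s • e)) = fun s =>
      expLogWeight c (x + s • e)
        * (2 * c * logWeight (x + s • e) * (⟪x + s • e, e⟫ / (1 + ‖x + s • e‖ ^ 2))) :=
    funext fun s => (hasDerivAt_expLogWeight_line c x e s).deriv
  rw [hderiv]
  have hin : HasDerivAt (fun s : ℝ => ⟪x + s • e, e⟫) (‖e‖ ^ 2) 0 := by
    have h : HasDerivAt (fun s : ℝ => ⟪x, e⟫ + s * ‖e‖ ^ 2) (‖e‖ ^ 2) 0 := by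
      simpa using ((hasDerivAt_id (0 : ℝ)).mul_const (‖e‖ ^ 2)).const_add ⟪x, e⟫
    convert h using 2 with s
    rw [inner_add_left, real_inner_smul_left, real_inner_self_eq_norm_sq]
  have hden : 1 + ‖x + (0 : ℝ) • e‖ ^ 2 ≠ 0 := by positivity
  have h := (hasDerivAt_expLogWeight_line c x e 0).mul
    (((hasDerivAt_logWeight_line x e 0).const_mul (2 * c)).mul
      (hin.fun_div ((hasDerivAt_norm_sq_line x e 0).const_add 1) hden))
  refine h.congr_deriv ?_
  simp only [Pi.mul_apply, zero_smul, add_zero]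
  have hx : (1 + ‖x‖ ^ 2 : ℝ) ≠ 0 := by positivity
  field_simp
  ring

theorem inner_div_sq_le (x e : Eucl n) :
    (⟪x, e⟫ / (1 + ‖x‖ ^ 2)) ^ 2 ≤ ‖e‖ ^ 2 / (1 + ‖x‖ ^ 2) := by
  rw [div_pow, div_le_div_iff₀ (by positivity) (by positivity)]
  have h1 : ⟪x, e⟫ ^ 2 ≤ ‖x‖ ^ 2 * ‖e‖ ^ 2 := by
    rw [← mul_pow, sq_le_sq, abs_of_nonneg (by positivity : 0 ≤ ‖x‖ * ‖e‖)]
    exact abs_real_inner_le_norm x e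
  have h2 : ⟪x, e⟫ ^ 2 ≤ (1 + ‖x‖ ^ 2) * ‖e‖ ^ 2 := by nlinarith [sq_nonneg ‖e‖]
  calc _ ≤ (1 + ‖x‖ ^ 2) * ‖e‖ ^ 2 * (1 + ‖x‖ ^ 2) := by gcongr
    _ = _ := by ring

theorem deriv_deriv_expLogWeight_line_le {c : ℝ} (hc : 0 ≤ c) (x e : Eucl n) :
    deriv (deriv fun s : ℝ => expLogWeight c (x + s • e)) 0
      ≤ expLogWeight c x * logWeight x ^ 2 * ((4 * c ^ 2 + 4 * c) * (‖e‖ ^ 2 / (1 + ‖x‖ ^ 2))) := by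
  rw [(hasDerivAt_deriv_expLogWeight_line c x e).deriv, mul_assoc (expLogWeight c x)]
  refine mul_le_mul_of_nonneg_left ?_ (Real.exp_pos _).le
  have h1 := inner_div_sq_le x e
  have hP := one_le_logWeight x
  set P := logWeight x
  set ξ := ⟪x, e⟫ / (1 + ‖x‖ ^ 2)
  set m := ‖e‖ ^ 2 / (1 + ‖x‖ ^ 2)
  have hm : 0 ≤ m := by positivity
  have h2 : 4 * c ^ 2 * P ^ 2 * ξ ^ 2 ≤ 4 * c ^ 2 * P ^ 2 * m := by gcongr
  have h3 : 2 * c * ξ ^ 2 ≤ 2 * c * m := by gcongr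
  have h4 : 0 ≤ 4 * c * P * ξ ^ 2 := by positivity
  have h5 : 2 * c * m * P ≤ 2 * c * m * P ^ 2 := by gcongr; nlinarith
  have h6 : 2 * c * m * 1 ≤ 2 * c * m * P ^ 2 := by gcongr; nlinarith
  nlinarith

/-- The barrier `λ exp ((L (t₁ - t) + G) (1 + log (1 + ‖x‖²)^{1/2})²) + K exp (-m (t - a))`. -/
def growthBarrier (n : ℕ) (l L G K m a t₁ : ℝ) (t : ℝ) (x : Eucl n) : ℝ :=
  l * expLogWeight (L * (t₁ - t) + G) x + K * Real.exp (-m * (t - a))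

variable {l L G K m a t₁ : ℝ}

theorem contDiff_growthBarrier {k : WithTop ℕ∞} :
    ContDiff ℝ k fun q : ℝ × Eucl n => growthBarrier n l L G K m a t₁ q.1 q.2 := by
  have h1 : ContDiff ℝ k fun q : ℝ × Eucl n => (L * (t₁ - q.1) + G) * logWeight q.2 ^ 2 := by
    have : ContDiff ℝ k fun q : ℝ × Eucl n => logWeight q.2 := contDiff_logWeight.comp contDiff_snd
    have h2 : ContDiff ℝ k fun q : ℝ × Eucl n => L * (t₁ - q.1) + G := by fun_prop
    exact h2.mul (this.pow 2)
  have h3 : ContDiff ℝ k fun q : ℝ × Eucl n => -m * (q.1 - a) := by fun_prop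
  exact (contDiff_const.mul h1.exp).add (contDiff_const.mul h3.exp)

theorem timeDeriv_growthBarrier (t : ℝ) (x : Eucl n) :
    timeDeriv (growthBarrier n l L G K m a t₁) t x
      = -(l * L * (expLogWeight (L * (t₁ - t) + G) x * logWeight x ^ 2))
        - m * K * Real.exp (-m * (t - a)) := by
  have h1 : HasDerivAt (fun s => (L * (t₁ - s) + G) * logWeight x ^ 2)
      (L * (-1) * logWeight x ^ 2) t :=
    ((((hasDerivAt_id t).const_sub t₁).const_mul L).add_const G).mul_const _
  have h2 : HasDerivAt (fun s => -m * (s - a)) (-m * 1) t :=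
    ((hasDerivAt_id t).sub_const a).const_mul (-m)
  have h3 := (h1.exp.const_mul l).add (h2.exp.const_mul K)
  refine h3.deriv.trans ?_
  simp only [expLogWeight]
  ring

theorem deriv_growthBarrier_line (t : ℝ) (x e : Eucl n) (s : ℝ) :
    deriv (fun s : ℝ => growthBarrier n l L G K m a t₁ t (x + s • e)) s
      = l * deriv (fun s : ℝ => expLogWeight (L * (t₁ - t) + G) (x + s • e)) s := by
  have h := hasDerivAt_expLogWeight_line (L * (t₁ - t) + G) x e s
  rw [h.deriv]
  exact ((h.const_mul l).add_const _).deriv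

theorem secondDirDeriv_growthBarrier (t : ℝ) (x e : Eucl n) :
    secondDirDeriv (growthBarrier n l L G K m a t₁) t x e
      = l * deriv (deriv fun s : ℝ => expLogWeight (L * (t₁ - t) + G) (x + s • e)) 0 := by
  have hderiv : (deriv fun s : ℝ => growthBarrier n l L G K m a t₁ t (x + s • e)) = fun s : ℝ =>
      l * deriv (fun s : ℝ => expLogWeight (L * (t₁ - t) + G) (x + s • e)) s :=
    funext (deriv_growthBarrier_line t x e)
  rw [secondDirDeriv, hderiv]
  exact ((hasDerivAt_deriv_expLogWeight_line _ x e).differentiableAt.hasDerivAt.const_mul l).deriv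

theorem spaceGrad_growthBarrier (t : ℝ) (x : Eucl n) :
    spaceGrad (growthBarrier n l L G K m a t₁) t x
      = (l * (expLogWeight (L * (t₁ - t) + G) x
        * (2 * (L * (t₁ - t) + G) * logWeight x / (1 + ‖x‖ ^ 2)))) • x := by
  refine ext_inner_right ℝ fun e => ?_
  rw [inner_spaceGrad contDiff_growthBarrier, deriv_growthBarrier_line,
    (hasDerivAt_expLogWeight_line _ x e 0).deriv, real_inner_smul_left]
  simp only [zero_smul, add_zero]
  ring

variable {C : ℝ}

theorem growthBarrier_strict {M G₁ : ℝ} {t : ℝ} {x : Eucl n} {B : Eucl n}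
    {S : Matrix (Fin n) (Fin d) ℝ} (hC : 0 ≤ C) (hl : 0 ≤ l) (hmK : 0 ≤ m * K) (hM : 0 ≤ M)
    (hB : ‖B‖ ≤ M * (1 + ‖x‖)) (hS : ‖S‖ ≤ M * (1 + ‖x‖))
    (h0 : 0 ≤ L * (t₁ - t) + G) (h1 : L * (t₁ - t) + G ≤ G₁)
    (hL : M ^ 2 * (4 * G₁ ^ 2 + 4 * G₁) + 4 * G₁ * M * (1 + C) + 1 ≤ L) :
    timeDeriv (growthBarrier n l L G K m a t₁) t x
      + (1 / 2 * ∑ k, secondDirDeriv (growthBarrier n l L G K m a t₁) t x (euclColumn S k)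
        + ⟪spaceGrad (growthBarrier n l L G K m a t₁) t x, B⟫
        + C * ‖rowMul (spaceGrad (growthBarrier n l L G K m a t₁) t x) S‖) ≤ -l := by
  set c := L * (t₁ - t) + G with hc
  set E := expLogWeight c x with hE
  set P := logWeight x with hP
  have hP1 : 1 ≤ P := one_le_logWeight x
  have hE1 : 1 ≤ E := Real.one_le_exp (by positivity)
  have hx1 : (1 + ‖x‖) ^ 2 ≤ 2 * (1 + ‖x‖ ^ 2) := by nlinarith [sq_nonneg (‖x‖ - 1)]
  have hx2 : ‖x‖ * (1 + ‖x‖) ≤ 2 * (1 + ‖x‖ ^ 2) := by nlinarith [sq_nonneg (‖x‖ - 1)]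
  have hden : 0 < 1 + ‖x‖ ^ 2 := by positivity
  have hG₁ : 0 ≤ G₁ := h0.trans h1
  have hPP : P ≤ P ^ 2 := le_self_pow₀ hP1 two_ne_zero
  have htime : timeDeriv (growthBarrier n l L G K m a t₁) t x ≤ -(l * L * (E * P ^ 2)) := by
    rw [timeDeriv_growthBarrier]
    have : 0 ≤ m * K * Real.exp (-m * (t - a)) := by positivity
    linarith
  have hsec : 1 / 2 * ∑ k, secondDirDeriv (growthBarrier n l L G K m a t₁) t x (euclColumn S k)
      ≤ l * (E * P ^ 2) * (M ^ 2 * (4 * G₁ ^ 2 + 4 * G₁)) := by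
    have hs2 : ‖S‖ ^ 2 / (1 + ‖x‖ ^ 2) ≤ 2 * M ^ 2 := by
      rw [div_le_iff₀ hden]
      calc ‖S‖ ^ 2 ≤ (M * (1 + ‖x‖)) ^ 2 := by gcongr
        _ = M ^ 2 * (1 + ‖x‖) ^ 2 := by ring
        _ ≤ M ^ 2 * (2 * (1 + ‖x‖ ^ 2)) := by gcongr
        _ = _ := by ring
    calc _ ≤ 1 / 2 * ∑ k, l * (E * P ^ 2 * ((4 * c ^ 2 + 4 * c)
          * (‖euclColumn S k‖ ^ 2 / (1 + ‖x‖ ^ 2)))) := by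
          gcongr with k
          rw [secondDirDeriv_growthBarrier]
          gcongr
          exact deriv_deriv_expLogWeight_line_le h0 x _
      _ = 1 / 2 * (l * (E * P ^ 2) * ((4 * c ^ 2 + 4 * c) * (‖S‖ ^ 2 / (1 + ‖x‖ ^ 2)))) := by
          simp only [← Finset.mul_sum, ← Finset.sum_div, sum_norm_euclColumn_sq]
          ring
      _ ≤ 1 / 2 * (l * (E * P ^ 2) * ((4 * G₁ ^ 2 + 4 * G₁) * (2 * M ^ 2))) := by gcongr
      _ = _ := by ring
  have hgrad : ∀ r, 0 ≤ r → r ≤ M * (1 + ‖x‖) →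
      ‖spaceGrad (growthBarrier n l L G K m a t₁) t x‖ * r ≤ l * (E * P ^ 2) * (4 * G₁ * M) := by
    intro r hr0 hr
    rw [spaceGrad_growthBarrier, norm_smul, Real.norm_of_nonneg (by positivity)]
    calc _ ≤ l * (E * (2 * c * P / (1 + ‖x‖ ^ 2))) * ‖x‖ * (M * (1 + ‖x‖)) := by gcongr
      _ = l * (E * P) * (2 * c) * M * (‖x‖ * (1 + ‖x‖) / (1 + ‖x‖ ^ 2)) := by ring
      _ ≤ l * (E * P ^ 2) * (2 * G₁) * M * 2 := by
          gcongr
          rw [div_le_iff₀ hden]; exact hx2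
      _ = _ := by ring
  have hdrift := (real_inner_le_norm (spaceGrad (growthBarrier n l L G K m a t₁) t x) B).trans
    (hgrad _ (norm_nonneg _) hB)
  have hz := mul_le_mul_of_nonneg_left
    ((norm_rowMul_le (spaceGrad (growthBarrier n l L G K m a t₁) t x) S).trans
      (hgrad _ (norm_nonneg _) hS)) hC
  have hEP : 1 ≤ E * P ^ 2 := one_le_mul_of_one_le_of_one_le hE1 (one_le_pow₀ hP1)
  have h2 := mul_le_mul_of_nonneg_left hL (mul_nonneg hl (zero_le_one.trans hEP))
  have h3 := mul_le_mul_of_nonneg_left hEP hl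
  nlinarith

end GrowthBarrier

section Comparison

variable {n d : ℕ} {T : ℝ}

theorem MemTheta.exists_growth_exponent {w : ℝ → Eucl n → ℝ} (hw : MemTheta T w) :
    ∃ A > 0, ∀ G ≥ A, ∀ ε > 0, ∃ R, ∀ t ∈ Icc 0 T, ∀ x, R ≤ ‖x‖ →
      |w t x| ≤ ε * expLogWeight G x := by
  obtain ⟨-, A, hA, h⟩ := hw
  refine ⟨A, hA, fun G hG ε hε => ?_⟩
  obtain ⟨R, hR⟩ := h ε hε
  refine ⟨R, fun t ht x hx => ?_⟩
  have h1 := hR t ht x hx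
  have hl : Real.log ((‖x‖ ^ 2 + 1) ^ ((1 : ℝ) / 2)) = logWeight x - 1 := by
    rw [Real.log_rpow (by positivity), logWeight, add_comm (‖x‖ ^ 2)]
    ring
  rw [hl, neg_mul, Real.exp_neg, ← div_eq_mul_inv, div_le_iff₀ (Real.exp_pos _)] at h1
  refine h1.trans ?_
  rw [expLogWeight]
  have hP := one_le_logWeight x
  gcongr
  · linarith
  · linarith

variable {U V : Type*} [MetricSpace U] [MetricSpace V] {C : ℝ}
  {b : ℝ → Eucl n → U → V → Eucl n} {σ : ℝ → Eucl n → U → V → Matrix (Fin n) (Fin d) ℝ}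
  {f : ℝ → Eucl n → ℝ → Eucl d → U → V → ℝ}
  [CompactSpace U] [CompactSpace V]

theorem RegularCoefficients.exists_linear_growth (hr : RegularCoefficients T C b σ f) :
    ∃ M ≥ 0, ∀ t ∈ Icc 0 T, ∀ x u v,
      ‖b t x u v‖ ≤ M * (1 + ‖x‖) ∧ ‖σ t x u v‖ ≤ M * (1 + ‖x‖) := by
  obtain ⟨M, hM, h⟩ := hr.exists_bound 0
  have hC := hr.pos
  refine ⟨M + C, by positivity, fun t ht x u v => ?_⟩
  have hx : M + C * ‖x‖ ≤ (M + C) * (1 + ‖x‖) := by nlinarith [norm_nonneg x]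
  have h0 := h t ht 0 norm_zero.le u v
  have hb := hr.b_lip t ht x 0 u v
  have hσ := hr.σ_lip t ht x 0 u v
  rw [dist_zero_right] at hb hσ
  exact ⟨by linarith [norm_le_norm_add_norm_sub' (b t x u v) (b t 0 u v)],
    by linarith [norm_le_norm_add_norm_sub' (σ t x u v) (σ t 0 u v)]⟩

variable [Nonempty U] [Nonempty V]

/-- Comparison on a short time interval, up to a barrier. -/
theorem RegularCoefficients.sub_le_growthBarrier (hr : RegularCoefficients T C b σ f)
    {w v : ℝ → Eucl n → ℝ} {g g' : Eucl n → ℝ}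
    (hw : IsViscositySubsolution T (lowerHamiltonian b σ f) g w)
    (hv : IsViscositySupersolution T (lowerHamiltonian b σ f) g' v)
    (hwc : ContinuousOn (fun q : ℝ × Eucl n => w q.1 q.2) (Icc 0 T ×ˢ univ))
    (hvc : ContinuousOn (fun q : ℝ × Eucl n => v q.1 q.2) (Icc 0 T ×ˢ univ))
    {a t₁ G L M l : ℝ} (ha : 0 ≤ a) (ht₁ : t₁ ≤ T) (hG : 0 ≤ G) (hL0 : 0 ≤ L) (hM : 0 ≤ M)
    (hl : 0 < l)
    (hgrow : ∃ R, ∀ t ∈ Icc 0 T, ∀ x, R ≤ ‖x‖ → w t x - v t x ≤ l * expLogWeight G x)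
    (hbound : ∀ t ∈ Icc 0 T, ∀ x u v,
      ‖b t x u v‖ ≤ M * (1 + ‖x‖) ∧ ‖σ t x u v‖ ≤ M * (1 + ‖x‖))
    (hL : M ^ 2 * (4 * (G + 1) ^ 2 + 4 * (G + 1)) + 4 * (G + 1) * M * (1 + C) + 1 ≤ L)
    (hshort : L * (t₁ - a) ≤ 1) (hterm : ∀ x, w t₁ x ≤ v t₁ x) :
    ∃ K, ∀ m ≥ 0, ∀ t ∈ Icc a t₁, ∀ x, w t x - v t x ≤ growthBarrier n l L G K m a t₁ t x := by
  obtain ⟨R₀, hR₀⟩ := hgrow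
  rcases lt_or_ge t₁ a with hlt | hat
  · exact ⟨0, fun m _ t ht => absurd (ht.1.trans ht.2) hlt.not_ge⟩
  have haT : a ∈ Icc 0 T := ⟨ha, hat.trans ht₁⟩
  have hmaps : MapsTo (fun x : Eucl n => (a, x)) (closedBall 0 R₀)
      (Icc 0 T ×ˢ (univ : Set (Eucl n))) := fun x _ => ⟨haT, mem_univ _⟩
  obtain ⟨K₀, hK₀⟩ := (isCompact_closedBall (0 : Eucl n) R₀).exists_bound_of_continuousOn
    ((hwc.sub hvc).comp (Continuous.prodMk_right a).continuousOn hmaps)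
  have hK : ∀ x, ‖x‖ ≤ R₀ → w a x - v a x ≤ max K₀ 0 := fun x hx =>
    (le_abs_self _).trans ((hK₀ x (by simpa using hx)).trans (le_max_left _ _))
  refine ⟨max K₀ 0, fun m hm t ht x => ?_⟩
  have hcoef : ∀ {t}, t ∈ Icc a t₁ → 0 ≤ L * (t₁ - t) ∧ L * (t₁ - t) ≤ 1 := fun ht =>
    ⟨mul_nonneg hL0 (sub_nonneg.2 ht.2), le_trans (by gcongr; exact ht.1) hshort⟩
  have hweight : ∀ t ∈ Icc a t₁, ∀ x : Eucl n,
      l * expLogWeight G x ≤ l * expLogWeight (L * (t₁ - t) + G) x := fun t ht x => by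
    rw [expLogWeight, expLogWeight]
    gcongr
    linarith [(hcoef ht).1]
  have hpos : ∀ c (x : Eucl n), 0 ≤ l * expLogWeight c x := fun c x =>
    mul_nonneg hl.le (Real.exp_pos _).le
  have hKpos : ∀ t, 0 ≤ max K₀ 0 * Real.exp (-m * (t - a)) := fun t =>
    mul_nonneg (le_max_right _ _) (Real.exp_pos _).le
  refine hr.sub_le_of_strict_barrier hw hv hwc hvc (R := max R₀ ‖x‖)
    contDiff_growthBarrier ha ht₁ hl (fun t ht x u v => ?_) (fun t ht x hx hbd => ?_) ht
    (le_max_right _ _)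
  · have ht' : t ∈ Icc 0 T := ⟨ha.trans ht.1.le, ht.2.le.trans ht₁⟩
    have hc := hcoef (Ioo_subset_Icc_self ht)
    exact growthBarrier_strict hr.pos.le hl.le (mul_nonneg hm (le_max_right _ _)) hM
      (hbound t ht' x u v).1 (hbound t ht' x u v).2 (by linarith) (G₁ := G + 1) (by linarith) hL
  · have ht' : t ∈ Icc 0 T := ⟨ha.trans ht.1, ht.2.trans ht₁⟩
    rw [growthBarrier]
    rcases le_or_gt R₀ ‖x‖ with hRx | hRx
    · linarith [hR₀ t ht' x hRx, hweight t ht x, hKpos t]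
    rcases hbd with rfl | rfl | hbd
    · have h1 := hK x hRx.le
      rw [sub_self, mul_zero, Real.exp_zero, mul_one]
      linarith [hpos (L * (t₁ - t) + G) x]
    · linarith [hterm x, hpos (L * (t - t) + G) x, hKpos t]
    · exact absurd (le_max_left R₀ ‖_‖) (by rw [← hbd]; exact hRx.not_ge)

theorem RegularCoefficients.comparison (hr : RegularCoefficients T C b σ f)
    {w v : ℝ → Eucl n → ℝ} {g : Eucl n → ℝ}
    (hw : IsViscositySubsolution T (lowerHamiltonian b σ f) g w)
    (hv : IsViscositySupersolution T (lowerHamiltonian b σ f) g v)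
    (hwΘ : MemTheta T w) (hvΘ : MemTheta T v) :
    ∀ t ∈ Icc 0 T, ∀ x, w t x ≤ v t x := by
  obtain ⟨A₁, hA₁, hg₁⟩ := hwΘ.exists_growth_exponent
  obtain ⟨A₂, hA₂, hg₂⟩ := hvΘ.exists_growth_exponent
  obtain ⟨M, hM, hbound⟩ := hr.exists_linear_growth
  have hC := hr.pos
  set G := max A₁ A₂ with hGdef
  have hG : 0 ≤ G := hA₁.le.trans (le_max_left _ _)
  set L := M ^ 2 * (4 * (G + 1) ^ 2 + 4 * (G + 1)) + 4 * (G + 1) * M * (1 + C) + 1 with hL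
  have hLpos : 0 < L := by positivity
  have hgrow : ∀ l > 0, ∃ R, ∀ t ∈ Icc 0 T, ∀ x, R ≤ ‖x‖ →
      w t x - v t x ≤ l * expLogWeight G x := fun l hl => by
    obtain ⟨R₁, h₁⟩ := hg₁ G (le_max_left _ _) (l / 2) (by positivity)
    obtain ⟨R₂, h₂⟩ := hg₂ G (le_max_right _ _) (l / 2) (by positivity)
    refine ⟨max R₁ R₂, fun t ht x hx => ?_⟩
    have h1 := (abs_le.1 (h₁ t ht x ((le_max_left _ _).trans hx))).2
    have h2 := (abs_le.1 (h₂ t ht x ((le_max_right _ _).trans hx))).1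
    linarith
  have hstep : ∀ a t₁, 0 ≤ a → t₁ ≤ T → L * (t₁ - a) ≤ 1 → (∀ x, w t₁ x ≤ v t₁ x) →
      ∀ t ∈ Ioc a t₁, ∀ x, w t x ≤ v t x := by
    intro a t₁ ha ht₁ hshort hterm t ht x
    have hl : ∀ l > 0, w t x - v t x ≤ l * expLogWeight (L * (t₁ - t) + G) x := by
      intro l hl
      obtain ⟨K, hK⟩ := hr.sub_le_growthBarrier hw hv hwΘ.1 hvΘ.1 ha ht₁ hG hLpos.le hM hl
        (hgrow l hl) hbound hL.ge hshort hterm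
      have hlim : Tendsto (fun m : ℝ => growthBarrier n l L G K m a t₁ t x) atTop
          (𝓝 (l * expLogWeight (L * (t₁ - t) + G) x + K * 0)) := by
        refine tendsto_const_nhds.add (Tendsto.const_mul K (Real.tendsto_exp_atBot.comp ?_))
        simp only [neg_mul]
        exact tendsto_neg_atTop_atBot.comp
          (tendsto_id.atTop_mul_const (sub_pos.2 ht.1))
      rw [mul_zero, add_zero] at hlim
      exact ge_of_tendsto hlim ((eventually_ge_atTop 0).mono fun m hm =>
        hK m hm t (Ioc_subset_Icc_self ht) x)
    have hlim : Tendsto (fun l : ℝ => l * expLogWeight (L * (t₁ - t) + G) x) (𝓝[>] 0)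
        (𝓝 (0 * expLogWeight (L * (t₁ - t) + G) x)) :=
      (tendsto_id.mono_left nhdsWithin_le_nhds).mul_const _
    rw [zero_mul] at hlim
    have := ge_of_tendsto hlim (eventually_mem_nhdsWithin.mono fun l hl' => hl l hl')
    linarith
  have hiter : ∀ k : ℕ, ∀ t ∈ Icc 0 T, 0 < t → L * (T - t) ≤ k / 2 → ∀ x, w t x ≤ v t x := by
    intro k
    induction k with
    | zero =>
      intro t ht _ hk x
      have hT : T = t := by
        rw [Nat.cast_zero, zero_div] at hk
        have := nonpos_of_mul_nonpos_right hk hLpos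
        linarith [ht.2]
      exact hT ▸ (hw.1 x).trans (hv.1 x)
    | succ k ih =>
      intro t ht ht0 hk
      have hLL : L * (1 / (2 * L)) = 1 / 2 := by field_simp
      have hLinv : 0 < 1 / (2 * L) := by positivity
      set t₁ := min T (t + 1 / (2 * L)) with ht₁
      have htt₁ : t ≤ t₁ := le_min ht.2 (by linarith)
      refine hstep (max 0 (t - 1 / (2 * L))) t₁ (le_max_left _ _) (min_le_left _ _) ?_
        (ih t₁ ⟨ht0.le.trans htt₁, min_le_left _ _⟩ (ht0.trans_le htt₁) ?_) t
        ⟨max_lt ht0 (by linarith), htt₁⟩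
      · calc L * (t₁ - max 0 (t - 1 / (2 * L)))
            ≤ L * (t + 1 / (2 * L) - (t - 1 / (2 * L))) := by
              gcongr
              · exact min_le_right _ _
              · exact le_max_right _ _
          _ = 2 * (L * (1 / (2 * L))) := by ring
          _ = 1 := by rw [hLL]; norm_num
      · rcases min_choice T (t + 1 / (2 * L)) with h | h <;> rw [ht₁, h]
        · rw [sub_self, mul_zero]
          positivity
        · push_cast at hk
          linarith
  intro t ht x
  rcases ht.1.eq_or_lt with rfl | ht0
  · rcases ht.2.eq_or_lt with rfl | hT
    · exact (hw.1 x).trans (hv.1 x)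
    have hmaps : MapsTo (fun s : ℝ => (s, x)) (Icc 0 T) (Icc 0 T ×ˢ (univ : Set (Eucl n))) :=
      fun s hs => ⟨hs, mem_univ _⟩
    have hpair : ContinuousOn (fun s : ℝ => (s, x)) (Icc 0 T) := by fun_prop
    have hcl : (0 : ℝ) ∈ closure (Ioc 0 T) := by
      rw [closure_Ioc hT.ne]
      exact left_mem_Icc.2 hT.le
    refine ContinuousWithinAt.closure_le hcl (f := fun s => w s x) (g := fun s => v s x)
      ((hwΘ.1.comp hpair hmaps 0 ht).mono Ioc_subset_Icc_self)
      ((hvΘ.1.comp hpair hmaps 0 ht).mono Ioc_subset_Icc_self) fun s hs => ?_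
    obtain ⟨k, hk⟩ := exists_nat_ge (2 * (L * (T - s)))
    exact hiter k s (Ioc_subset_Icc_self hs) hs.1 (by linarith) x
  · obtain ⟨k, hk⟩ := exists_nat_ge (2 * (L * (T - t)))
    exact hiter k t ht ht0 (by linarith) x

end Comparison

theorem IsViscositySolution.congr {n : ℕ} {T : ℝ}
    {H H' : ℝ → Eucl n → ℝ → Eucl n → Matrix (Fin n) (Fin n) ℝ → ℝ} {g : Eucl n → ℝ}
    {w : ℝ → Eucl n → ℝ} (hw : IsViscositySolution T H g w)
    (h : ∀ t ∈ Ico 0 T, ∀ x y p X, X.IsSymm → H t x y p X = H' t x y p X) :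
    IsViscositySolution T H' g w := by
  refine ⟨⟨hw.1.1, fun φ hφ t ht x hmax => ?_⟩, ⟨hw.2.1, fun φ hφ t ht x hmin => ?_⟩⟩
  · rw [← h t ht _ _ _ _ (isSymm_spaceHess hφ.1 t x)]
    exact hw.1.2 φ hφ t ht x hmax
  · rw [← h t ht _ _ _ _ (isSymm_spaceHess hφ.1 t x)]
    exact hw.2.2 φ hφ t ht x hmin

end ViscosityComparison

/-- **Remark 6.2 (existence of a value).** Under the Isaacs condition `H⁻ = H⁺`, a viscosity
solution `W ∈ Θ` of the lower Isaacs equation and a viscosity solution `Uval ∈ Θ` of the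
upper Isaacs equation coincide: the game has a value. -/
theorem value_of_game_under_isaacs_condition
    {n d : ℕ} (hn : 1 ≤ n) (hd : 1 ≤ d) {T : ℝ} (hT : 0 < T)
    {U V : Type*} [MetricSpace U] [CompactSpace U] [Nonempty U]
    [MetricSpace V] [CompactSpace V] [Nonempty V]
    (b : ℝ → Eucl n → U → V → Eucl n)
    (σ : ℝ → Eucl n → U → V → Matrix (Fin n) (Fin d) ℝ)
    (f : ℝ → Eucl n → ℝ → Eucl d → U → V → ℝ)
    (Φ : Eucl n → ℝ)
    -- (H4.1)(i): for fixed `x`, `b(·,x,·,·)` and `σ(·,x,·,·)` are continuous in `(t,u,v)`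
    (hb_cont : ∀ x : Eucl n, ContinuousOn
      (fun q : ℝ × U × V => b q.1 x q.2.1 q.2.2)
      (Set.Icc (0 : ℝ) T ×ˢ (Set.univ : Set (U × V))))
    (hσ_cont : ∀ x : Eucl n, ContinuousOn
      (fun q : ℝ × U × V => σ q.1 x q.2.1 q.2.2)
      (Set.Icc (0 : ℝ) T ×ˢ (Set.univ : Set (U × V))))
    -- (H4.1)(ii): `b` and `σ` are Lipschitz in `x`, uniformly in `(t,u,v)`
    (hbσ_lip : ∃ C > (0 : ℝ), ∀ t ∈ Set.Icc (0 : ℝ) T, ∀ (x x' : Eucl n) (u : U) (v : V),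
      ‖b t x u v - b t x' u v‖ + ‖σ t x u v - σ t x' u v‖ ≤ C * ‖x - x'‖)
    -- (H4.2)(i): for fixed `(x,y,z)`, `f(·,x,y,z,·,·)` is continuous in `(t,u,v)`
    (hf_cont : ∀ (x : Eucl n) (y : ℝ) (z : Eucl d), ContinuousOn
      (fun q : ℝ × U × V => f q.1 x y z q.2.1 q.2.2)
      (Set.Icc (0 : ℝ) T ×ˢ (Set.univ : Set (U × V))))
    -- (H4.2): `f` is Lipschitz in `(x,y,z)`, uniformly in `(t,u,v)`
    (hf_lip : ∃ C > (0 : ℝ), ∀ t ∈ Set.Icc (0 : ℝ) T,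
      ∀ (x x' : Eucl n) (y y' : ℝ) (z z' : Eucl d) (u : U) (v : V),
      |f t x y z u v - f t x' y' z' u v| ≤ C * (‖x - x'‖ + |y - y'| + ‖z - z'‖))
    -- (H4.2): `Φ` is Lipschitz
    (hΦ_lip : ∃ C > (0 : ℝ), ∀ x x' : Eucl n, |Φ x - Φ x'| ≤ C * ‖x - x'‖)
    -- Isaacs condition
    (hIsaacs : ∀ t ∈ Set.Icc (0 : ℝ) T, ∀ (x : Eucl n) (y : ℝ) (p : Eucl n)
      (X : Matrix (Fin n) (Fin n) ℝ), X.IsSymm →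
      lowerHamiltonian b σ f t x y p X = upperHamiltonian b σ f t x y p X)
    (W Uval : ℝ → Eucl n → ℝ)
    (hWΘ : MemTheta T W) (hUΘ : MemTheta T Uval)
    (hW : IsViscositySolution T (lowerHamiltonian b σ f) Φ W)
    (hU : IsViscositySolution T (upperHamiltonian b σ f) Φ Uval) :
    ∀ t ∈ Set.Icc (0 : ℝ) T, ∀ x : Eucl n, W t x = Uval t x := by
  obtain ⟨C₁, hC₁, h₁⟩ := hbσ_lip
  obtain ⟨C₂, hC₂, h₂⟩ := hf_lip
  have hr : RegularCoefficients T (max C₁ C₂) b σ f :=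
    { pos := lt_max_of_lt_left hC₁
      b_cont := hb_cont
      σ_cont := hσ_cont
      f_cont := hf_cont
      b_lip := fun t ht x x' u v => by
        rw [dist_eq_norm]
        refine (le_add_of_nonneg_right (norm_nonneg _)).trans ((h₁ t ht x x' u v).trans ?_)
        gcongr
        exact le_max_left _ _
      σ_lip := fun t ht x x' u v => by
        rw [dist_eq_norm]
        refine (le_add_of_nonneg_left (norm_nonneg _)).trans ((h₁ t ht x x' u v).trans ?_)
        gcongr
        exact le_max_left _ _
      f_lip := fun t ht x x' y y' z z' u v => by
        refine (h₂ t ht x x' y y' z z' u v).trans ?_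
        gcongr
        exact le_max_right _ _ }
  have hU' : IsViscositySolution T (lowerHamiltonian b σ f) Φ Uval :=
    hU.congr fun t ht x y p X hX => (hIsaacs t ⟨ht.1, ht.2.le⟩ x y p X hX).symm
  intro t ht x
  exact le_antisymm (hr.comparison hW.1 hU'.2 hWΘ hUΘ t ht x)
    (hr.comparison hU'.1 hW.2 hUΘ hWΘ t ht x)
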